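/- arXiv:1503.08057 — 2 statements merged into one kernel-verified Lean document; each statement's English description precedes it below -/
import Mathlib

section
/- Suppose c' is a positive integer such that every graph containing no triangle, no induced cycle of length 5, and no induced cycle of even length at least 6 has chromatic number less than c'. Let G be a connected graph containing no triangle and no induced cycle of even length at least 6, let v be a vertex of G and (N_0, N_1, …) be the v-levelling. For all integers k ≥ 1 and δ such that χ(N_k) ≥ δ + 1 ≥ 2c' + 1, there exists a strong rooted PCP of order 1 in N_k with leftovers at least δ/2 − 15. -/
/-! The path is built inside a connected subset `H` of the level `N_k` with `χ(H) ≥ δ`, in which only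
one vertex `x` is adjacent to a certain vertex `u` of `N_{k-1}`. Such a set consists of a component
`K'` of `K ∖ N(u)`, for a component `K` of the level, and of a neighbour `x` of `K'` in `K ∩ N(u)`;
since `G` has no triangle, `N(u)` is stable and removing it costs one colour. Then `u` is a root of
every parity changing path with origin `x` inside `H`.

As `χ(H) ≥ c'`, the set `H` contains an induced five-cycle `φ`. The neighbours of `φ` induce a
four-colourable graph (`col_nbrs_five_cycle`). A component of `H ∖ N(φ)` together with a shortest path
from `x` to it forms a `Stem` `A` (`exists_stem`): in its levelling `μ` from `x`, the levels that meet
`φ` or `N(φ)` are singletons. If `ab` is an edge inside a level of `A`, then two descending paths from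
`a` and `b` give paths of both parities from `x` to `a`; with `φ` added they form the regular block,
which is four-colourable (`Stem.col_block`). Such a block can be left through a child `d` of `a`, with
the last block anywhere in the levels above, away from the neighbours of `a` and `b` and attached to
`d` by a single vertex (`Stem.exit`).

Call a set a `Spine` if all parents of its members are in it and isolated in their level. Since there
is no even hole of length at least six, the parent sets of two vertices of a spine with a common
neighbour are nested (`Spine.nested`), and therefore every level of a spine is two-colourable
(`Spine.col_level`). The vertices which cannot be reached upwards from an edge inside a lower level
form a spine. For `δ ≥ 11` this leaves, in some level, a set of large chromatic number which lies
above a single edge, and removing the neighbours of the vertices `a`, `b`, `d` from it leaves the last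
block (`Stem.exists_pcp_large`).

For `δ ≤ 10` the bound on the leftovers is vacuous, and any parity changing path suffices. If there
is none then `A` is three-colourable (`Stem.exists_pcp_small`), whereas `χ(A) ≥ δ - 4 ≥ 4`, because
the seven-cycle shows that `c' ≥ 4` (`three_lt_of_forall_chi_lt`). -/

open SimpleGraph

/-- The chromatic number of `G`, as a natural number. -/
noncomputable def chi {V : Type} (G : SimpleGraph V) : ℕ := G.chromaticNumber.toNat

/-- The chromatic number of the subgraph of `G` induced by the vertex set `A`. -/
noncomputable def chiSet {V : Type} (G : SimpleGraph V) (A : Set V) : ℕ :=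
  (G.induce A).chromaticNumber.toNat

/-- `G` contains no induced cycle of length `n`: there is no graph embedding
(induced-subgraph embedding) of the `n`-cycle into `G`. -/
def NoInducedCycle {V : Type} (G : SimpleGraph V) (n : ℕ) : Prop :=
  IsEmpty (cycleGraph n ↪g G)

/-- The `k`-th level of the `v`-levelling: vertices at distance exactly `k` from `v`. -/
def level {V : Type} (G : SimpleGraph V) (v : V) (k : ℕ) : Set V :=
  {x | G.Reachable v x ∧ G.dist v x = k}

/-- `N(S)`: the set of vertices adjacent to at least one vertex of `S`. -/
def neighborsOf {V : Type} (G : SimpleGraph V) (S : Set V) : Set V :=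
  {x | ∃ s ∈ S, G.Adj s x}

/-- A walk is an induced path: it is a path, and its vertex set induces
no edges other than the path edges. -/
def IsInducedPathW {V : Type} {G : SimpleGraph V} {u w : V} (p : G.Walk u w) : Prop :=
  p.IsPath ∧ ∀ a ∈ p.support, ∀ b ∈ p.support, G.Adj a b → s(a, b) ∈ p.edges

/-- A Parity Changing Path (PCP) of order `ℓ` in `G`: regular blocks `block 0, …, block (ℓ-1)`
(vertex sets of induced subgraphs), a last block `lastBlock`, induced paths `path i` of
length at least `2` from `y i ∈ block i` to `x i.succ`, with the prescribed shared vertices,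
disjointness and edge conditions, an induced odd and an induced even `x i`–`y i` path inside
each regular block, `lastBlock` connected and each regular block `4`-colorable. -/
structure PCP {V : Type} (G : SimpleGraph V) (ℓ : ℕ) where
  block : Fin ℓ → Set V
  lastBlock : Set V
  x : Fin (ℓ + 1) → V
  y : Fin ℓ → V
  path : (i : Fin ℓ) → G.Walk (y i) (x i.succ)
  x_mem : ∀ i : Fin ℓ, x i.castSucc ∈ block i
  y_mem : ∀ i : Fin ℓ, y i ∈ block i
  xlast_mem : x (Fin.last ℓ) ∈ lastBlock
  path_induced : ∀ i, IsInducedPathW (path i)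
  path_length : ∀ i, 2 ≤ (path i).length
  blocks_disjoint : ∀ i j, i ≠ j → Disjoint (block i) (block j)
  block_last_disjoint : ∀ i, Disjoint (block i) lastBlock
  block_path_inter : ∀ i j : Fin ℓ, ∀ w ∈ block i, w ∈ (path j).support →
      (j = i ∧ w = y i) ∨ ((j : ℕ) + 1 = (i : ℕ) ∧ w = x i.castSucc)
  last_path_inter : ∀ j : Fin ℓ, ∀ w ∈ lastBlock, w ∈ (path j).support →
      (j : ℕ) + 1 = ℓ ∧ w = x (Fin.last ℓ)
  paths_disjoint : ∀ i j : Fin ℓ, i ≠ j → ∀ w,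
      w ∈ (path i).support → w ∈ (path j).support → False
  edges_within : ∀ a b : V,
      a ∈ (⋃ i, block i) ∪ lastBlock ∪ (⋃ i, {w | w ∈ (path i).support}) →
      b ∈ (⋃ i, block i) ∪ lastBlock ∪ (⋃ i, {w | w ∈ (path i).support}) →
      G.Adj a b →
      (∃ i, a ∈ block i ∧ b ∈ block i) ∨ (a ∈ lastBlock ∧ b ∈ lastBlock) ∨
        (∃ i, a ∈ (path i).support ∧ b ∈ (path i).support)
  odd_path : ∀ i : Fin ℓ, ∃ p : G.Walk (x i.castSucc) (y i),
      IsInducedPathW p ∧ (∀ w ∈ p.support, w ∈ block i) ∧ Odd p.length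
  even_path : ∀ i : Fin ℓ, ∃ p : G.Walk (x i.castSucc) (y i),
      IsInducedPathW p ∧ (∀ w ∈ p.support, w ∈ block i) ∧ Even p.length
  last_connected : (G.induce lastBlock).Connected
  block_chrom : ∀ i, (G.induce (block i)).chromaticNumber ≤ 4

/-- The origin of a PCP. -/
def PCP.origin {V : Type} {G : SimpleGraph V} {ℓ : ℕ} (P : PCP G ℓ) : V := P.x 0

/-- The vertex set of a PCP. -/
def PCP.support {V : Type} {G : SimpleGraph V} {ℓ : ℕ} (P : PCP G ℓ) : Set V :=
  (⋃ i, P.block i) ∪ P.lastBlock ∪ (⋃ i, {w | w ∈ (P.path i).support})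

/-- The leftovers of a PCP: the chromatic number of its last block. -/
noncomputable def PCP.leftovers {V : Type} {G : SimpleGraph V} {ℓ : ℕ} (P : PCP G ℓ) : ℕ :=
  chiSet G P.lastBlock

/-- A strong PCP: every regular block contains an induced 5-cycle. -/
def PCP.IsStrong {V : Type} {G : SimpleGraph V} {ℓ : ℕ} (P : PCP G ℓ) : Prop :=
  ∀ i : Fin ℓ, ∃ f : cycleGraph 5 ↪g G, ∀ t, f t ∈ P.block i

/-- A PCP lies in the level `N_k` of the `v`-levelling and is rooted there: some vertex
`u' ∈ N_{k-1}` is adjacent to the origin and to no other vertex of the PCP. -/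
def PCP.IsRootedInLevel {V : Type} {G : SimpleGraph V} {ℓ : ℕ} (P : PCP G ℓ)
    (v : V) (k : ℕ) : Prop :=
  P.support ⊆ level G v k ∧
    ∃ u' ∈ level G v (k - 1), G.Adj u' P.origin ∧
      ∀ w ∈ P.support, w ≠ P.origin → ¬ G.Adj u' w

/-! ### Colourings of vertex sets and connected vertex sets -/

/-- The subgraph induced by `A` is `n`-colourable; colours are natural numbers less than `n` and the
colouring is a function on all of `V`, so that colourings of different sets combine easily. -/
def Col {V : Type} (G : SimpleGraph V) (A : Set V) (n : ℕ) : Prop :=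
  ∃ f : V → ℕ, (∀ a ∈ A, f a < n) ∧ ∀ a ∈ A, ∀ b ∈ A, G.Adj a b → f a ≠ f b

/-- The subgraph induced by `A` is connected (in particular `A` is nonempty). -/
def Conn {V : Type} (G : SimpleGraph V) (A : Set V) : Prop := (G.induce A).Connected

section Basics

variable {V : Type} {G : SimpleGraph V} {A B : Set V} {m n : ℕ}

lemma Col.colorable (h : Col G A n) : (G.induce A).Colorable n := by
  obtain ⟨f, h1, h2⟩ := h
  refine ⟨SimpleGraph.Coloring.mk (fun a => (⟨f a, h1 a a.2⟩ : Fin n)) ?_⟩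
  intro a b hab he
  exact h2 a a.2 b b.2 hab (by simpa using he)

lemma Col.of_colorable (h : (G.induce A).Colorable n) : Col G A n := by
  classical
  obtain ⟨c⟩ := h
  refine ⟨fun v => if hv : v ∈ A then (c ⟨v, hv⟩ : ℕ) else 0, ?_, ?_⟩
  · intro a ha
    simp only [ha, dif_pos]
    exact (c ⟨a, ha⟩).2
  · intro a ha b hb hab he
    simp only [ha, hb, dif_pos] at he
    exact c.valid (v := ⟨a, ha⟩) (w := ⟨b, hb⟩) hab (Fin.ext he)

lemma chiSet_le_iff [Fintype V] : chiSet G A ≤ n ↔ Col G A n := by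
  classical
  have hne : (G.induce A).chromaticNumber ≠ ⊤ :=
    SimpleGraph.chromaticNumber_ne_top_iff_exists.2
      ⟨_, SimpleGraph.colorable_of_fintype (G.induce A)⟩
  have : chiSet G A ≤ n ↔ (G.induce A).chromaticNumber ≤ n := by
    unfold chiSet
    rw [← ENat.natCast_toNat hne]
    simp
  rw [this, SimpleGraph.chromaticNumber_le_iff_colorable]
  exact ⟨Col.of_colorable, Col.colorable⟩

lemma Col.mono (h : Col G B n) (hAB : A ⊆ B) (hn : n ≤ m) : Col G A m := by
  obtain ⟨f, h1, h2⟩ := h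
  exact ⟨f, fun a ha => (h1 a (hAB ha)).trans_le hn,
    fun a ha b hb => h2 a (hAB ha) b (hAB hb)⟩

lemma Col.union (hA : Col G A m) (hB : Col G B n) : Col G (A ∪ B) (m + n) := by
  classical
  obtain ⟨f, f1, f2⟩ := hA
  obtain ⟨g, g1, g2⟩ := hB
  refine ⟨fun v => if v ∈ A then f v else m + g v, ?_, ?_⟩
  · intro a ha
    by_cases h : a ∈ A
    · have := f1 a h
      simp only [h, if_true]; omega
    · have := g1 a (ha.resolve_left h)
      simp only [h, if_false]; omega
  · intro a ha b hb hab
    by_cases h : a ∈ A <;> by_cases h' : b ∈ A <;> simp only [h, h', if_true, if_false]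
    · exact f2 a h b h' hab
    · have := f1 a h; omega
    · have := f1 b h'; omega
    · have := g2 a (ha.resolve_left h) b (hb.resolve_left h') hab
      omega

/-- Removing a set that is `m`-colourable lowers the chromatic number by at most `m`. -/
lemma not_col_diff (h : ¬ Col G A (m + n)) (hB : Col G B m) : ¬ Col G (A \ B) n := by
  intro h'
  refine h ((hB.union h').mono ?_ le_rfl)
  intro v hv
  by_cases hvB : v ∈ B
  · exact Or.inl hvB
  · exact Or.inr ⟨hv, hvB⟩

lemma nonempty_of_not_col (h : ¬ Col G A n) : A.Nonempty := by
  by_contra he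
  rw [Set.not_nonempty_iff_eq_empty] at he
  subst he
  exact h ⟨fun _ => 0, by simp, by simp⟩

lemma col_one_of_stable (h : ∀ a ∈ A, ∀ b ∈ A, ¬ G.Adj a b) : Col G A 1 :=
  ⟨fun _ => 0, by simp, fun a ha b hb hab => (h a ha b hb hab).elim⟩

/-- The set of vertices reachable from `a` by walks with all further vertices in `A` is
connected. -/
lemma conn_reach (a : V) :
    Conn G {v | Relation.ReflTransGen (fun v w => G.Adj v w ∧ w ∈ A) a v} := by
  set K : Set V := {v | Relation.ReflTransGen (fun v w => G.Adj v w ∧ w ∈ A) a v} with hK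
  have haK : a ∈ K := Relation.ReflTransGen.refl
  have key : ∀ v (hv : v ∈ K), (G.induce K).Reachable ⟨a, haK⟩ ⟨v, hv⟩ := by
    intro v hv
    have hv' : Relation.ReflTransGen (fun v w => G.Adj v w ∧ w ∈ A) a v := hv
    induction hv' with
    | refl => exact SimpleGraph.Reachable.refl _
    | @tail b c hb hbc ih =>
      refine (ih hb).trans (SimpleGraph.Adj.reachable ?_)
      exact hbc.1
  have : Nonempty K := ⟨⟨a, haK⟩⟩
  exact SimpleGraph.Connected.mk (fun u v => (key u u.2).symm.trans (key v v.2))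

/-- A set that is not `n`-colourable has a connected component that is not `n`-colourable. -/
lemma exists_component (h : ¬ Col G A n) :
    ∃ D ⊆ A, Conn G D ∧ ¬ Col G D n ∧ ∀ v ∈ D, ∀ w ∈ A, G.Adj v w → w ∈ D := by
  classical
  by_contra hno
  push Not at hno
  apply h
  let R : V → V → Prop := fun v w => G.Adj v w ∧ w ∈ A
  let K : V → Set V := fun a => {v | Relation.ReflTransGen R a v}
  have hKA : ∀ a ∈ A, K a ⊆ A := by
    intro a ha v hv
    rcases Relation.ReflTransGen.cases_tail hv with h | ⟨c, _, hc⟩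
    · exact h ▸ ha
    · exact hc.2
  have hconn : ∀ a ∈ A, Conn G (K a) := fun a _ => conn_reach a
  have hclosed : ∀ a ∈ A, ∀ v ∈ K a, ∀ w ∈ A, G.Adj v w → w ∈ K a :=
    fun a ha v hv w hw hvw => Relation.ReflTransGen.tail hv ⟨hvw, hw⟩
  have hcol : ∀ a ∈ A, Col G (K a) n := by
    intro a ha
    by_contra hc
    obtain ⟨v, hv, w, hw, hvw, hwn⟩ := hno (K a) (hKA a ha) (hconn a ha) hc
    exact hwn (hclosed a ha v hv w hw hvw)
  have hsymm : ∀ a ∈ A, ∀ v, v ∈ K a → a ∈ K v := by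
    intro a ha v hv
    have hv' : Relation.ReflTransGen R a v := hv
    induction hv' with
    | refl => exact hv
    | @tail b c hb hbc ih =>
      exact Relation.ReflTransGen.head ⟨hbc.1.symm, hKA a ha hb⟩ (ih hb)
  have heq : ∀ a ∈ A, ∀ v ∈ K a, K v = K a := by
    intro a ha v hv
    ext w
    exact ⟨fun hw => Relation.ReflTransGen.trans hv hw,
      fun hw => Relation.ReflTransGen.trans (hsymm a ha v hv) hw⟩
  -- one colouring is chosen for each component, as a function of the component as a set
  have hF : ∀ S : Set V, ∃ f : V → ℕ, Col G S n →
      (∀ a ∈ S, f a < n) ∧ ∀ a ∈ S, ∀ b ∈ S, G.Adj a b → f a ≠ f b := by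
    intro S
    by_cases hS : Col G S n
    · obtain ⟨f, hf⟩ := hS
      exact ⟨f, fun _ => hf⟩
    · exact ⟨fun _ => 0, fun hh => (hS hh).elim⟩
  choose F hF using hF
  have hself : ∀ a, a ∈ K a := fun a => Relation.ReflTransGen.refl
  refine ⟨fun v => F (K v) v, fun a ha => (hF (K a) (hcol a ha)).1 a (hself a), ?_⟩
  intro a ha b hb hab
  have hbK : b ∈ K a := hclosed a ha a (hself a) b hb hab
  show F (K a) a ≠ F (K b) b
  rw [heq a ha b hbK]
  exact (hF (K a) (hcol a ha)).2 a (hself a) b hbK hab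

/-! ### Levellings of connected sets -/

/-- `μ` is the levelling of the connected set `A` by the distance from `x` inside `A`. -/
structure Lev (G : SimpleGraph V) (A : Set V) (x : V) (μ : V → ℕ) : Prop where
  root : x ∈ A
  zero : ∀ v ∈ A, (μ v = 0 ↔ v = x)
  step : ∀ v ∈ A, ∀ w ∈ A, G.Adj v w → μ w ≤ μ v + 1
  par : ∀ v ∈ A, ∀ i, μ v = i + 1 → ∃ w ∈ A, G.Adj w v ∧ μ w = i

lemma Conn.exists_lev (h : Conn G A) {x : V} (hx : x ∈ A) : ∃ μ, Lev G A x μ := by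
  classical
  refine ⟨fun v => if hv : v ∈ A then (G.induce A).dist ⟨x, hx⟩ ⟨v, hv⟩ else 0, hx, ?_, ?_, ?_⟩
  · intro v hv
    simp only [hv, dif_pos]
    rw [SimpleGraph.Connected.dist_eq_zero_iff h]
    constructor
    · intro e; exact (congrArg Subtype.val e).symm
    · rintro rfl; rfl
  · intro v hv w hw hvw
    simp only [hv, hw, dif_pos]
    have h1 : (G.induce A).Adj ⟨v, hv⟩ ⟨w, hw⟩ := hvw
    have := SimpleGraph.Connected.dist_triangle (hconn := h) (u := ⟨x, hx⟩) (v := ⟨v, hv⟩)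
      (w := ⟨w, hw⟩)
    rw [SimpleGraph.dist_eq_one_iff_adj.2 h1] at this
    exact this
  · intro v hv i hi
    simp only [hv, dif_pos] at hi
    obtain ⟨p, hp⟩ := h.exists_walk_length_eq_dist (⟨x, hx⟩ : A) ⟨v, hv⟩
    have hlen : p.length = i + 1 := hp.trans hi
    have hadj := p.adj_getVert_succ (i := i) (by omega)
    rw [← hlen, p.getVert_length] at hadj
    refine ⟨p.getVert i, (p.getVert i).2, hadj, ?_⟩
    have hmem := (p.getVert i).2
    simp only [hmem, dif_pos]
    have h1 : (G.induce A).dist ⟨x, hx⟩ (p.getVert i) ≤ i := by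
      have := SimpleGraph.dist_le (p.take i)
      rw [SimpleGraph.Walk.take_length] at this
      omega
    have h2 := SimpleGraph.Connected.dist_triangle (hconn := h) (u := ⟨x, hx⟩)
      (v := p.getVert i) (w := ⟨v, hv⟩)
    rw [SimpleGraph.dist_eq_one_iff_adj.2 hadj, hi] at h2
    show (G.induce A).dist ⟨x, hx⟩ (p.getVert i) = i
    omega

lemma Lev.conn {x : V} {μ : V → ℕ} (h : Lev G A x μ) : Conn G A := by
  have key : ∀ i v (hv : v ∈ A), μ v = i → (G.induce A).Reachable ⟨x, h.root⟩ ⟨v, hv⟩ := by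
    intro i
    induction i with
    | zero =>
      intro v hv h0
      have := (h.zero v hv).1 h0
      subst this
      exact SimpleGraph.Reachable.refl _
    | succ i ih =>
      intro v hv hi
      obtain ⟨w, hw, hwv, hwi⟩ := h.par v hv i hi
      exact (ih w hw hwi).trans
        (SimpleGraph.Adj.reachable (show (G.induce A).Adj ⟨w, hw⟩ ⟨v, hv⟩ from hwv))
  have : Nonempty A := ⟨⟨x, h.root⟩⟩
  exact SimpleGraph.Connected.mk
    (fun u v => (key _ u u.2 rfl).symm.trans (key _ v v.2 rfl))

/-- A descending path of the levelling: `f t` lies in level `t`. -/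
lemma Lev.chain {x : V} {μ : V → ℕ} (h : Lev G A x μ) {v : V} (hv : v ∈ A) :
    ∃ f : ℕ → V, f (μ v) = v ∧ (∀ t ≤ μ v, f t ∈ A ∧ μ (f t) = t) ∧
      ∀ t < μ v, G.Adj (f t) (f (t + 1)) := by
  classical
  have key : ∀ i v, v ∈ A → μ v = i → ∃ f : ℕ → V, f i = v ∧ (∀ t ≤ i, f t ∈ A ∧ μ (f t) = t) ∧
      ∀ t < i, G.Adj (f t) (f (t + 1)) := by
    intro i
    induction i with
    | zero =>
      intro v hv h0
      refine ⟨fun _ => v, rfl, ?_, by simp⟩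
      intro t ht
      obtain rfl : t = 0 := by omega
      exact ⟨hv, h0⟩
    | succ i ih =>
      intro v hv hi
      obtain ⟨w, hw, hwv, hwi⟩ := h.par v hv i hi
      obtain ⟨f, f0, f1, f2⟩ := ih w hw hwi
      refine ⟨fun t => if t ≤ i then f t else v, by simp, ?_, ?_⟩
      · intro t ht
        by_cases hti : t ≤ i
        · simpa only [hti, if_true] using f1 t hti
        · obtain rfl : t = i + 1 := by omega
          simpa only [hti, if_false] using ⟨hv, hi⟩
      · intro t ht
        by_cases hti : t < i
        · have h1 : t ≤ i := hti.le
          have h2 : t + 1 ≤ i := hti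
          simpa only [h1, h2, if_true] using f2 t hti
        · obtain rfl : t = i := by omega
          have h2 : ¬ (t + 1 ≤ t) := by omega
          simpa only [le_refl, h2, if_true, if_false, f0] using hwv
  exact key _ v hv rfl

/-- The union of a connected set with a vertex adjacent to it is connected. -/
lemma Conn.insert_vertex (h : Conn G A) {v w : V} (hw : w ∈ A) (hvw : G.Adj v w) :
    Conn G (insert v A) := by
  obtain ⟨μ, hμ⟩ := h.exists_lev hw
  by_cases hv : v ∈ A
  · rwa [Set.insert_eq_of_mem hv]
  have hwm : w ∈ insert v A := Set.mem_insert_of_mem _ hw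
  have key : ∀ i u (hu : u ∈ A), μ u = i →
      (G.induce (insert v A)).Reachable ⟨w, hwm⟩ ⟨u, Set.mem_insert_of_mem _ hu⟩ := by
    intro i
    induction i with
    | zero =>
      intro u hu h0
      have := (hμ.zero u hu).1 h0
      subst this
      exact SimpleGraph.Reachable.refl _
    | succ i ih =>
      intro u hu hi
      obtain ⟨z, hz, hzu, hzi⟩ := hμ.par u hu i hi
      exact (ih z hz hzi).trans (SimpleGraph.Adj.reachable
        (show (G.induce (insert v A)).Adj ⟨z, _⟩ ⟨u, _⟩ from hzu))
  have key' : ∀ u (hu : u ∈ insert v A),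
      (G.induce (insert v A)).Reachable ⟨w, hwm⟩ ⟨u, hu⟩ := by
    intro u hu
    rcases hu with rfl | hu
    · exact SimpleGraph.Adj.reachable
        (show (G.induce (insert u A)).Adj ⟨w, _⟩ ⟨u, _⟩ from hvw.symm)
    · exact key _ u hu rfl
  have : Nonempty (insert v A : Set V) := ⟨⟨w, hwm⟩⟩
  exact SimpleGraph.Connected.mk (fun u u' => (key' u u.2).symm.trans (key' u' u'.2))

/-- In a connected set `A`, a nonempty proper subset has an edge to its complement in `A`. -/
lemma Conn.exists_boundary (h : Conn G A) (hBA : B ⊆ A) (hB : B.Nonempty) (hne : ∃ w ∈ A, w ∉ B) :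
    ∃ e ∈ B, ∃ w ∈ A, w ∉ B ∧ G.Adj e w := by
  obtain ⟨e, he⟩ := hB
  obtain ⟨μ, hμ⟩ := h.exists_lev (hBA he)
  by_contra hno
  push Not at hno
  have key : ∀ i u, u ∈ A → μ u = i → u ∈ B := by
    intro i
    induction i with
    | zero =>
      intro u hu h0
      rw [(hμ.zero u hu).1 h0]; exact he
    | succ i ih =>
      intro u hu hi
      obtain ⟨z, hz, hzu, hzi⟩ := hμ.par u hu i hi
      by_contra hub
      exact hno z (ih z hz hzi) u hu hub hzu
  obtain ⟨w, hw, hwB⟩ := hne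
  exact hwB (key _ w hw rfl)

/-! ### Induced paths and induced cycles from sequences of vertices -/

/-- A sequence `f 0, …, f n` in which exactly the consecutive vertices are adjacent is an induced
path. -/
lemma exists_induced_walk (f : ℕ → V) (n : ℕ)
    (hadj : ∀ t < n, G.Adj (f t) (f (t + 1)))
    (hne : ∀ s t, s < t → t ≤ n → f s ≠ f t)
    (hnon : ∀ s t, s + 1 < t → t ≤ n → ¬ G.Adj (f s) (f t)) :
    ∃ p : G.Walk (f 0) (f n), IsInducedPathW p ∧ p.length = n ∧
      ∀ w, w ∈ p.support ↔ ∃ t ≤ n, w = f t := by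
  have key : ∀ n, (∀ t < n, G.Adj (f t) (f (t + 1))) →
      ∃ p : G.Walk (f 0) (f n), p.length = n ∧ p.support = (List.range (n + 1)).map f ∧
        ∀ t < n, s(f t, f (t + 1)) ∈ p.edges := by
    intro n
    induction n with
    | zero =>
      intro _
      exact ⟨SimpleGraph.Walk.nil, rfl, by simp, by simp⟩
    | succ n ih =>
      intro h
      obtain ⟨p, p1, p2, p3⟩ := ih (fun t ht => h t (by omega))
      refine ⟨p.concat (h n (by omega)), by simp [p1], ?_, ?_⟩
      · rw [SimpleGraph.Walk.support_concat, p2, List.range_succ (n := n + 1)]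
        simp
      · intro t ht
        rw [SimpleGraph.Walk.edges_concat]
        rcases Nat.lt_or_ge t n with h' | h'
        · simp [p3 t h']
        · obtain rfl : t = n := by omega
          simp
  obtain ⟨p, p1, p2, p3⟩ := key n hadj
  have p2' : ∀ w, w ∈ p.support ↔ ∃ t ≤ n, w = f t := by
    intro w
    rw [p2, List.mem_map]
    constructor
    · rintro ⟨t, ht, rfl⟩
      exact ⟨t, by rw [List.mem_range] at ht; omega, rfl⟩
    · rintro ⟨t, ht, rfl⟩
      exact ⟨t, by rw [List.mem_range]; omega, rfl⟩
  refine ⟨p, ⟨?_, ?_⟩, p1, p2'⟩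
  · rw [SimpleGraph.Walk.isPath_def, p2]
    refine List.Nodup.map_on ?_ List.nodup_range
    intro s hs t ht hst
    rw [List.mem_range] at hs ht
    rcases lt_trichotomy s t with h | h | h
    · exact (hne s t h (by omega) hst).elim
    · exact h
    · exact (hne t s h (by omega) hst.symm).elim
  · intro a ha b hb hab
    obtain ⟨s, hs, rfl⟩ := (p2' a).1 ha
    obtain ⟨t, ht, rfl⟩ := (p2' b).1 hb
    rcases lt_trichotomy s t with h | h | h
    · have : t = s + 1 := by
        by_contra hc
        exact hnon s t (by omega) ht hab
      subst this
      exact p3 s (by omega)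
    · subst h; exact (G.loopless.irrefl _ hab).elim
    · have : s = t + 1 := by
        by_contra hc
        exact hnon t s (by omega) hs hab.symm
      subst this
      rw [Sym2.eq_swap]
      exact p3 t (by omega)

/-- A cyclic sequence `g 0, …, g (m - 1)` in which exactly the cyclically consecutive vertices are
adjacent is an induced cycle. -/
lemma exists_cycle_embedding (g : ℕ → V) (m : ℕ) (hm : 3 ≤ m)
    (hne : ∀ s t, s < t → t < m → g s ≠ g t)
    (hadj : ∀ s t, s < t → t < m → (G.Adj (g s) (g t) ↔ t = s + 1 ∨ (s = 0 ∧ t = m - 1))) :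
    Nonempty (cycleGraph m ↪g G) := by
  obtain ⟨m, rfl⟩ : ∃ k, m = k + 1 := ⟨m - 1, by omega⟩
  have hcyc : ∀ s t : Fin (m + 1), (s : ℕ) < t →
      ((cycleGraph (m + 1)).Adj s t ↔ (t : ℕ) = s + 1 ∨ ((s : ℕ) = 0 ∧ (t : ℕ) = m)) := by
    intro s t hst
    have h1 := s.2
    have h2 := t.2
    rw [cycleGraph_adj', Fin.sub_def, Fin.sub_def]
    simp only
    have e1 : (m + 1 - (t : ℕ) + s) % (m + 1) = m + 1 - t + s := Nat.mod_eq_of_lt (by omega)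
    have e2 : (m + 1 - (s : ℕ) + t) % (m + 1) = t - s := by
      rw [show m + 1 - (s : ℕ) + t = (t - s) + (m + 1) by omega, Nat.add_mod_right,
        Nat.mod_eq_of_lt (by omega)]
    rw [e1, e2]
    omega
  have hinj : Function.Injective (fun t : Fin (m + 1) => g t) := by
    intro s t hst
    rcases lt_trichotomy (s : ℕ) t with h | h | h
    · exact (hne s t h t.2 hst).elim
    · exact Fin.ext h
    · exact (hne t s h s.2 hst.symm).elim
  refine ⟨⟨⟨fun t => g t, hinj⟩, ?_⟩⟩
  intro s t
  show G.Adj (g s) (g t) ↔ _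
  rcases lt_trichotomy (s : ℕ) t with h | h | h
  · rw [hadj s t h t.2, hcyc s t h]; simp
  · have : s = t := Fin.ext h
    subst this; simp
  · rw [G.adj_comm, (cycleGraph (m + 1)).adj_comm s t, hadj t s h s.2, hcyc t s h]; simp

/-- No hole of length six, as a statement about six vertices. -/
lemma no_six (h : NoInducedCycle G 6) {a b c d e f : V}
    (hab : G.Adj a b) (hbc : G.Adj b c) (hcd : G.Adj c d) (hde : G.Adj d e) (hef : G.Adj e f)
    (hfa : G.Adj f a) (hac : ¬ G.Adj a c) (had : ¬ G.Adj a d) (hae : ¬ G.Adj a e)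
    (hbd : ¬ G.Adj b d) (hbe : ¬ G.Adj b e) (hbf : ¬ G.Adj b f) (hce : ¬ G.Adj c e)
    (hcf : ¬ G.Adj c f) (hdf : ¬ G.Adj d f) : False := by
  have nac : a ≠ c := by rintro rfl; exact had hcd
  have nad : a ≠ d := by rintro rfl; exact hae hde
  have nae : a ≠ e := by rintro rfl; exact hbe hab.symm
  have nbd : b ≠ d := by rintro rfl; exact hbe hde
  have nbe : b ≠ e := by rintro rfl; exact hbf hef
  have nbf : b ≠ f := by rintro rfl; exact hbe hef.symm
  have nce : c ≠ e := by rintro rfl; exact hcf hef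
  have ncf : c ≠ f := by rintro rfl; exact hac hfa.symm
  have ndf : d ≠ f := by rintro rfl; exact had hfa.symm
  obtain ⟨φ⟩ := exists_cycle_embedding (G := G)
    (fun t => match t with | 0 => a | 1 => b | 2 => c | 3 => d | 4 => e | _ => f) 6 (by norm_num)
    (by
      intro s t hst ht
      interval_cases t <;> interval_cases s <;> first | assumption | exact G.ne_of_adj ‹_› |
        exact (G.ne_of_adj ‹_›).symm)
    (by
      intro s t hst ht
      interval_cases t <;> interval_cases s <;> simp [*, G.adj_comm a f])
  exact h.false φ

/-- No triangle, as a statement about three vertices. -/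
lemma no_triangle (h : G.CliqueFree 3) {a b c : V} (hab : G.Adj a b) (hac : G.Adj a c) :
    ¬ G.Adj b c := by
  intro hbc
  classical
  exact h {a, b, c} (SimpleGraph.is3Clique_triple_iff.2 ⟨hab, hac, hbc⟩)

end Basics

/-! ### Neighbourhoods of five-cycles, and a lower bound for the constant -/

section FiveCycle

variable {V : Type} {G : SimpleGraph V}

lemma five_cycle_facts (φ : cycleGraph 5 ↪g G) :
    (G.Adj (φ 0) (φ 1) ∧ G.Adj (φ 1) (φ 2) ∧ G.Adj (φ 2) (φ 3) ∧ G.Adj (φ 3) (φ 4) ∧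
      G.Adj (φ 0) (φ 4)) ∧
    (¬ G.Adj (φ 0) (φ 2) ∧ ¬ G.Adj (φ 0) (φ 3) ∧ ¬ G.Adj (φ 1) (φ 3) ∧ ¬ G.Adj (φ 1) (φ 4) ∧
      ¬ G.Adj (φ 2) (φ 4)) := by
  simp only [φ.map_adj_iff]
  decide

/-- The neighbours of an induced five-cycle induce a four-colourable graph. Each vertex is coloured
by its neighbours on the cycle; two adjacent vertices have no common neighbour, and where they could
still receive the same colour, they form a hole of length six with four vertices of the cycle. -/
lemma col_nbrs_five_cycle (h3 : G.CliqueFree 3) (h6 : NoInducedCycle G 6) (φ : cycleGraph 5 ↪g G) :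
    Col G {w | ∃ i, G.Adj w (φ i)} 4 := by
  classical
  obtain ⟨⟨a01, a12, a23, a34, a04⟩, n02, n03, n13, n14, n24⟩ := five_cycle_facts φ
  have tri : ∀ {a b c : V}, G.Adj a b → G.Adj a c → ¬ G.Adj b c := fun h h' => no_triangle h3 h h'
  refine ⟨fun w => if G.Adj w (φ 3) then 1 else if G.Adj w (φ 0) then 0 else
    if G.Adj w (φ 2) then (if G.Adj w (φ 4) then 3 else 0) else 2, ?_, ?_⟩
  · intro w _
    dsimp only
    split_ifs <;> norm_num
  -- the two hole configurations
  have hole1 : ∀ v w, G.Adj v w → G.Adj v (φ 0) → ¬ G.Adj v (φ 2) → ¬ G.Adj v (φ 3) →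
      G.Adj w (φ 2) → ¬ G.Adj w (φ 0) → ¬ G.Adj w (φ 4) → False := by
    intro v w hvw v0 v2 v3 w2 w0 w4
    have v4 : ¬ G.Adj v (φ 4) := tri v0.symm a04
    have w3 : ¬ G.Adj w (φ 3) := tri w2.symm a23
    exact no_six h6 v0 a04 a34.symm a23.symm w2.symm hvw.symm v4 v3 v2 n03 n02
      (fun h => w0 h.symm) (fun h => n24 h.symm) (fun h => w4 h.symm) (fun h => w3 h.symm)
  have hole2 : ∀ v w, G.Adj v w → G.Adj v (φ 1) → ¬ G.Adj v (φ 3) → ¬ G.Adj v (φ 4) →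
      G.Adj w (φ 4) → ¬ G.Adj w (φ 1) → ¬ G.Adj w (φ 2) → False := by
    intro v w hvw v1 v3 v4 w4 w1 w2
    have v2 : ¬ G.Adj v (φ 2) := tri v1.symm a12
    have w3 : ¬ G.Adj w (φ 3) := tri w4.symm a34.symm
    exact no_six h6 v1 a12 a23 a34 w4.symm hvw.symm v2 v3 v4 n13 n14
      (fun h => w1 h.symm) n24 (fun h => w2 h.symm) (fun h => w3 h.symm)
  have last : ∀ w, (∃ i, G.Adj w (φ i)) → ¬ G.Adj w (φ 3) → ¬ G.Adj w (φ 0) → ¬ G.Adj w (φ 2) →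
      G.Adj w (φ 1) ∨ G.Adj w (φ 4) := by
    rintro w ⟨i, hi⟩ w3 w0 w2
    fin_cases i
    · exact (w0 hi).elim
    · exact Or.inl hi
    · exact (w2 hi).elim
    · exact (w3 hi).elim
    · exact Or.inr hi
  intro v hv w hw hvw
  have hsame : ∀ i, G.Adj v (φ i) → ¬ G.Adj w (φ i) := fun i h => fun h' =>
    tri hvw h h'
  have l1 := last v hv
  have l2 := last w hw
  have k1 := hole1 v w hvw
  have k2 := hole1 w v hvw.symm
  have k3 := hole2 v w hvw
  have k4 := hole2 w v hvw.symm
  have s0 := hsame 0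
  have s1 := hsame 1
  have s2 := hsame 2
  have s3 := hsame 3
  have s4 := hsame 4
  clear last hole1 hole2 hsame
  dsimp only
  clear tri a01 a12 a23 a34 a04 n02 n03 n13 n14 n24 h3 h6
  split_ifs <;> first | omega | (exfalso; grind)

lemma three_lt_of_forall_chi_lt (c' : ℕ)
    (hC : ∀ (W : Type) [Fintype W] (H : SimpleGraph W),
      H.CliqueFree 3 → NoInducedCycle H 5 →
      (∀ n : ℕ, 6 ≤ n → Even n → NoInducedCycle H n) → chi H < c') : 3 < c' := by
  have hχ : chi (cycleGraph 7) = 3 := by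
    unfold chi
    rw [chromaticNumber_cycleGraph_of_odd 7 (by norm_num) (by decide)]
    rfl
  rw [← hχ]
  refine hC _ _ ?_ ?_ ?_
  · intro s hs
    rw [SimpleGraph.is3Clique_iff] at hs
    obtain ⟨a, b, c, hab, hac, hbc, -⟩ := hs
    have : ∀ a b : Fin 7, (cycleGraph 7).Adj a b → ∀ c, (cycleGraph 7).Adj a c →
      ¬ (cycleGraph 7).Adj b c := by decide
    exact this a b hab c hac hbc
  · refine ⟨fun f => ?_⟩
    obtain ⟨⟨a01, a12, a23, a34, a04⟩, -⟩ := five_cycle_facts f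
    have : ∀ a b : Fin 7, (cycleGraph 7).Adj a b → ∀ c, (cycleGraph 7).Adj b c →
      ∀ d, (cycleGraph 7).Adj c d → ∀ e, (cycleGraph 7).Adj d e → ¬ (cycleGraph 7).Adj a e := by
      decide
    exact this _ _ a01 _ a12 _ a23 _ a34 a04
  · intro n hn _
    refine ⟨fun f => ?_⟩
    have hcard : n ≤ 7 := by
      simpa using Fintype.card_le_of_injective f f.injective
    obtain rfl | rfl : n = 6 ∨ n = 7 := by omega
    · have : ∀ a b : Fin 7, (cycleGraph 7).Adj a b → ∀ c, (cycleGraph 7).Adj b c → a ≠ c →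
          ∀ d, (cycleGraph 7).Adj c d → b ≠ d → ∀ e, (cycleGraph 7).Adj d e → c ≠ e →
          ∀ g, (cycleGraph 7).Adj e g → d ≠ g → ¬ (cycleGraph 7).Adj a g := by
        decide
      refine this (f 0) (f 1) ?_ (f 2) ?_ ?_ (f 3) ?_ ?_ (f 4) ?_ ?_ (f 5) ?_ ?_ ?_
      all_goals first | (rw [f.map_adj_iff]; decide) | (rw [f.injective.ne_iff]; decide)
    · exact absurd ‹Even 7› (by decide)

end FiveCycle

/-! ### Assembling a parity changing path of order one -/

section Exit

variable {V : Type} {G : SimpleGraph V}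

/-- A parity changing path of order one with regular block `B`, last block `E` and connecting path
`a, d, d'`. -/
lemma exists_pcp_one {B E : Set V} {x a d d' : V} (hx : x ∈ B) (ha : a ∈ B) (hd' : d' ∈ E)
    (had : G.Adj a d) (hdd' : G.Adj d d') (hBE : Disjoint B E) (hdB : d ∉ B) (hdE : d ∉ E)
    (anti : ∀ p ∈ B, ∀ q ∈ E, ¬ G.Adj p q) (hBd : ∀ p ∈ B, G.Adj p d → p = a)
    (hEd : ∀ q ∈ E, G.Adj d q → q = d')
    (hodd : ∃ p : G.Walk x a, IsInducedPathW p ∧ (∀ w ∈ p.support, w ∈ B) ∧ Odd p.length)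
    (heven : ∃ p : G.Walk x a, IsInducedPathW p ∧ (∀ w ∈ p.support, w ∈ B) ∧ Even p.length)
    (hE : Conn G E) (hB : Col G B 4) :
    ∃ P : PCP G 1, (∀ i, P.block i = B) ∧ P.lastBlock = E ∧ P.origin = x ∧
      P.support ⊆ B ∪ E ∪ {d} := by
  have haE : a ∉ E := fun h => Set.disjoint_left.1 hBE ha h
  have hd'B : d' ∉ B := fun h => Set.disjoint_left.1 hBE h hd'
  obtain ⟨W, W1, W2, W3⟩ : ∃ W : G.Walk a d', IsInducedPathW W ∧ W.length = 2 ∧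
      ∀ w, w ∈ W.support ↔ w = a ∨ w = d ∨ w = d' := by
    have had' : a ≠ d' := fun h => haE (h ▸ hd')
    refine ⟨SimpleGraph.Walk.cons had (SimpleGraph.Walk.cons hdd' SimpleGraph.Walk.nil), ⟨?_, ?_⟩,
      rfl, by simp⟩
    · rw [SimpleGraph.Walk.isPath_def]
      simp [had.ne, hdd'.ne, had']
    · have h1 := anti a ha d' hd'
      have h2 : ¬ G.Adj d' a := fun h => h1 h.symm
      intro p hp q hq hpq
      simp only [SimpleGraph.Walk.support_cons, SimpleGraph.Walk.support_nil, List.mem_cons,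
        List.not_mem_nil, or_false] at hp hq
      rcases hp with rfl | rfl | rfl <;> rcases hq with rfl | rfl | rfl <;>
        first | exact (G.loopless.irrefl _ hpq).elim | contradiction | simp
  let P : PCP G 1 :=
    { block := fun _ => B
      lastBlock := E
      x := ![x, d']
      y := fun _ => a
      path := fun i => W.copy rfl (by fin_cases i; rfl)
      x_mem := by intro i; fin_cases i; exact hx
      y_mem := fun _ => ha
      xlast_mem := hd'
      path_induced := by intro i; fin_cases i; exact W1
      path_length := by intro i; fin_cases i; exact W2.ge
      blocks_disjoint := by
        intro i j hij
        exact (hij (Subsingleton.elim _ _)).elim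
      block_last_disjoint := fun _ => hBE
      block_path_inter := by
        intro i j w hw hwj
        rw [SimpleGraph.Walk.support_copy, W3] at hwj
        left
        refine ⟨Subsingleton.elim _ _, ?_⟩
        rcases hwj with rfl | rfl | rfl
        · rfl
        · exact (hdB hw).elim
        · exact (hd'B hw).elim
      last_path_inter := by
        intro j w hw hwj
        rw [SimpleGraph.Walk.support_copy, W3] at hwj
        fin_cases j
        refine ⟨rfl, ?_⟩
        rcases hwj with rfl | rfl | rfl
        · exact (haE hw).elim
        · exact (hdE hw).elim
        · rfl
      paths_disjoint := by
        intro i j hij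
        exact (hij (Subsingleton.elim _ _)).elim
      edges_within := by
        intro p q hp hq hpq
        simp only [SimpleGraph.Walk.support_copy, Set.iUnion_const, Set.mem_union,
          Set.mem_ofPred_eq, W3] at hp hq ⊢
        have hp' : p ∈ B ∨ p ∈ E ∨ p = d := by
          rcases hp with (h | h) | h | h | h
          · exact Or.inl h
          · exact Or.inr (Or.inl h)
          · exact Or.inl (h ▸ ha)
          · exact Or.inr (Or.inr h)
          · exact Or.inr (Or.inl (h ▸ hd'))
        have hq' : q ∈ B ∨ q ∈ E ∨ q = d := by
          rcases hq with (h | h) | h | h | h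
          · exact Or.inl h
          · exact Or.inr (Or.inl h)
          · exact Or.inl (h ▸ ha)
          · exact Or.inr (Or.inr h)
          · exact Or.inr (Or.inl (h ▸ hd'))
        rcases hp' with hp' | hp' | rfl <;> rcases hq' with hq' | hq' | rfl
        · exact Or.inl ⟨0, hp', hq'⟩
        · exact (anti p hp' q hq' hpq).elim
        · exact Or.inr (Or.inr ⟨0, Or.inl (hBd p hp' hpq), Or.inr (Or.inl rfl)⟩)
        · exact (anti q hq' p hp' hpq.symm).elim
        · exact Or.inr (Or.inl ⟨hp', hq'⟩)
        · exact Or.inr (Or.inr ⟨0, Or.inr (Or.inr (hEd p hp' hpq.symm)), Or.inr (Or.inl rfl)⟩)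
        · exact Or.inr (Or.inr ⟨0, Or.inr (Or.inl rfl), Or.inl (hBd q hq' hpq.symm)⟩)
        · exact Or.inr (Or.inr ⟨0, Or.inr (Or.inl rfl), Or.inr (Or.inr (hEd q hq' hpq))⟩)
        · exact (G.loopless.irrefl _ hpq).elim
      odd_path := by intro i; fin_cases i; exact hodd
      even_path := by intro i; fin_cases i; exact heven
      last_connected := hE
      block_chrom := fun _ =>
        SimpleGraph.chromaticNumber_le_iff_colorable.2 hB.colorable }
  refine ⟨P, fun _ => rfl, rfl, rfl, ?_⟩
  intro w hw
  have hw' : w ∈ (⋃ _ : Fin 1, B) ∪ E ∪ ⋃ i, {w | w ∈ (P.path i).support} := hw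
  simp only [P, SimpleGraph.Walk.support_copy, Set.iUnion_const, Set.mem_union,
    Set.mem_ofPred_eq, W3] at hw'
  simp only [Set.mem_union, Set.mem_singleton_iff]
  rcases hw' with (h | h) | h | h | h
  · exact Or.inl (Or.inl h)
  · exact Or.inl (Or.inr h)
  · exact Or.inl (Or.inl (h ▸ ha))
  · exact Or.inr h
  · exact Or.inl (Or.inr (h ▸ hd'))

end Exit

/-! ### Edges inside levels and leaving the stem -/

/-- The part of the graph in which the path is built: `A` is a connected set with levelling `μ`
from `x`, the levels below `n` are singletons, and the vertices of `A` lying on or adjacent to the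
five-cycle `φ` are among these singletons. The set `A` need not contain `φ`. -/
structure Stem {V : Type} (G : SimpleGraph V) (A : Set V) (x : V) (μ : V → ℕ)
    (φ : cycleGraph 5 ↪g G) (n : ℕ) : Prop where
  lev : Lev G A x μ
  single : ∀ v ∈ A, ∀ w ∈ A, μ v = μ w → μ v < n → v = w
  low : ∀ v ∈ A, ∀ i, v = φ i ∨ G.Adj v (φ i) → μ v < n
  span : ∀ v ∈ A, ∀ w ∈ A, ∀ i, G.Adj v (φ i) → G.Adj w (φ i) → μ w ≤ μ v + 2

section Exit

variable {V : Type} {G : SimpleGraph V} {A : Set V} {x : V} {μ : V → ℕ} {φ : cycleGraph 5 ↪g G}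
  {n : ℕ}

/-- The two descending paths from an edge inside a level, together with the five-cycle, form a
four-colourable set: the first path is coloured by parity with colours `0, 1`, the rest of the
second path by parity with colours `2, 3`, and four vertices of the five-cycle alternate between
`2` and `3`; the neighbours of the fifth on the first path all lie in levels of one parity, so that
one of the colours `0, 1` is free for it. -/
lemma Stem.col_block (hS : Stem G A x μ φ n) (h3 : G.CliqueFree 3) {i : ℕ} (hni : n ≤ i + 1)
    {ra rb : ℕ → V}
    (ha : ∀ t ≤ i, ra t ∈ A ∧ μ (ra t) = t) (ha' : ∀ t < i, G.Adj (ra t) (ra (t + 1)))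
    (hb : ∀ t ≤ i, rb t ∈ A ∧ μ (rb t) = t) :
    Col G ({w | ∃ t ≤ i, w = ra t} ∪ {w | ∃ t ≤ i, w = rb t} ∪ Set.range φ) 4 := by
  classical
  obtain ⟨⟨a01, a12, a23, a34, a04⟩, n02, n03, n13, n14, n24⟩ := five_cycle_facts φ
  set RA : Set V := {w | ∃ t ≤ i, w = ra t} with hRA
  set RB : Set V := {w | ∃ t ≤ i, w = rb t} with hRB
  have hRAA : ∀ w ∈ RA, w ∈ A ∧ μ w ≤ i ∧ w = ra (μ w) := by
    rintro w ⟨t, ht, rfl⟩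
    obtain ⟨h1, h2⟩ := ha t ht
    exact ⟨h1, by omega, by rw [h2]⟩
  have hRBA : ∀ w ∈ RB, w ∈ A ∧ μ w ≤ i ∧ w = rb (μ w) := by
    rintro w ⟨t, ht, rfl⟩
    obtain ⟨h1, h2⟩ := hb t ht
    exact ⟨h1, by omega, by rw [h2]⟩
  have hlow : ∀ w ∈ A, μ w < n → w ∈ RA := by
    intro w hw hwn
    have hwi : μ w ≤ i := by omega
    obtain ⟨h1, h2⟩ := ha (μ w) hwi
    exact ⟨μ w, hwi, hS.single w hw _ h1 h2.symm hwn⟩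
  let e : ℕ := if ∃ w ∈ RA, G.Adj w (φ 0) ∧ μ w % 2 = 0 then 1 else 0
  let cφ : V → ℕ := fun w => if w = φ 0 then e else if w = φ 1 ∨ w = φ 3 then 2 else 3
  let f : V → ℕ := fun w => if w ∈ RA then μ w % 2 else if w ∈ RB then 2 + μ w % 2 else cφ w
  have fA : ∀ w ∈ RA, f w = μ w % 2 := fun w hw => by simp only [f, hw, if_true]
  have fB : ∀ w ∈ RB, w ∉ RA → f w = 2 + μ w % 2 := fun w hw hw' => by
    simp only [f, hw, hw', if_true, if_false]
  have hφB : ∀ j, φ j ∉ RA → φ j ∉ RB := by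
    intro j hj hj'
    exact hj (hlow _ (hRBA _ hj').1 (hS.low _ (hRBA _ hj').1 j (Or.inl rfl)))
  have fφ : ∀ j, φ j ∉ RA → f (φ j) = cφ (φ j) := fun j hj => by
    simp only [f, hj, hφB j hj, if_false]
  have c0 : cφ (φ 0) = e := by simp [cφ]
  have c1 : cφ (φ 1) = 2 := by simp [cφ]
  have c2 : cφ (φ 2) = 3 := by simp [cφ]
  have c3 : cφ (φ 3) = 2 := by simp [cφ]
  have c4 : cφ (φ 4) = 3 := by simp [cφ]
  have he : e < 2 := by simp only [e]; split_ifs <;> norm_num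
  have hstep : ∀ p ∈ RA, ∀ q ∈ RA, G.Adj p q → μ q = μ p + 1 ∨ μ p = μ q + 1 := by
    intro p hp q hq hpq
    obtain ⟨p1, p2, p3⟩ := hRAA p hp
    obtain ⟨q1, q2, q3⟩ := hRAA q hq
    have h1 := hS.lev.step p p1 q q1 hpq
    have h2 := hS.lev.step q q1 p p1 hpq.symm
    have h4 : μ p ≠ μ q := by
      intro h
      rw [p3, q3, h] at hpq
      exact G.loopless.irrefl _ hpq
    omega
  -- colours of the fifth vertex of the cycle and of its neighbours on the first path
  have he' : ∀ p ∈ RA, G.Adj p (φ 0) → μ p % 2 ≠ e := by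
    intro p hp hp0 hpe
    obtain ⟨p1, p2, p3⟩ := hRAA p hp
    by_cases hex : ∃ w ∈ RA, G.Adj w (φ 0) ∧ μ w % 2 = 0
    · have he1 : e = 1 := by simp only [e, hex, if_true]
      obtain ⟨w, hw, hw0, hwe⟩ := hex
      obtain ⟨w1, w2, w3⟩ := hRAA w hw
      have s1 := hS.span p p1 w w1 0 hp0 hw0
      have s2 := hS.span w w1 p p1 0 hw0 hp0
      have : G.Adj p w := by
        obtain h | h : μ w = μ p + 1 ∨ μ p = μ w + 1 := by omega
        · have := ha' (μ p) (by omega)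
          rwa [← h, ← w3, ← p3] at this
        · have := ha' (μ w) (by omega)
          rw [← h, ← w3, ← p3] at this
          exact this.symm
      exact no_triangle h3 hp0.symm hw0.symm this
    · have he0 : e = 0 := by simp only [e, hex, if_false]
      exact hex ⟨p, hp, hp0, by omega⟩
  have main : ∀ p q, p ∈ RA ∪ RB ∪ Set.range φ → q ∈ RA ∪ RB ∪ Set.range φ → p ∈ RA →
      G.Adj p q → f p ≠ f q := by
    intro p q _ hq hp hpq
    rw [fA p hp]
    by_cases hqA : q ∈ RA
    · rw [fA q hqA]
      have := hstep p hp q hqA hpq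
      omega
    · rcases hq with (h | h) | ⟨j, rfl⟩
      · exact (hqA h).elim
      · rw [fB q h hqA]; omega
      · rw [fφ j hqA]
        fin_cases j
        · exact fun h => he' p hp hpq (h.trans c0)
        · have := c1; simp only [Fin.mk_one] at *; omega
        · have := c2; simp only [Fin.reduceFinMk] at *; omega
        · have := c3; simp only [Fin.reduceFinMk] at *; omega
        · have := c4; simp only [Fin.reduceFinMk] at *; omega
  refine ⟨f, ?_, ?_⟩
  · intro w hw
    by_cases hwA : w ∈ RA
    · rw [fA w hwA]; omega
    · rcases hw with (h | h) | ⟨j, rfl⟩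
      · exact (hwA h).elim
      · rw [fB w h hwA]; omega
      · rw [fφ j hwA]
        simp only [cφ]
        split_ifs <;> omega
  · intro p hp q hq hpq
    by_cases hpA : p ∈ RA
    · exact main p q hp hq hpA hpq
    by_cases hqA : q ∈ RA
    · exact (main q p hq hp hqA hpq.symm).symm
    have hBφ : ∀ w ∈ RB, w ∉ RA → ∀ j, ¬ G.Adj w (φ j) := by
      intro w hw hw' j hj
      exact hw' (hlow w (hRBA w hw).1 (hS.low w (hRBA w hw).1 j (Or.inr hj)))
    rcases hp with (h | h) | ⟨j, rfl⟩
    · exact (hpA h).elim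
    · rcases hq with (h' | h') | ⟨l, rfl⟩
      · exact (hqA h').elim
      · rw [fB p h hpA, fB q h' hqA]
        obtain ⟨p1, p2, p3⟩ := hRBA p h
        obtain ⟨q1, q2, q3⟩ := hRBA q h'
        have h1 := hS.lev.step p p1 q q1 hpq
        have h2 := hS.lev.step q q1 p p1 hpq.symm
        have h4 : μ p ≠ μ q := by
          intro h
          rw [p3, q3, h] at hpq
          exact G.loopless.irrefl _ hpq
        omega
      · exact (hBφ p h hpA l hpq).elim
    · rcases hq with (h' | h') | ⟨l, rfl⟩
      · exact (hqA h').elim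
      · exact (hBφ q h' hqA j hpq.symm).elim
      · rw [fφ j hpA, fφ l hqA]
        have n20 := fun h => n02 (SimpleGraph.Adj.symm h)
        have n30 := fun h => n03 (SimpleGraph.Adj.symm h)
        have n31 := fun h => n13 (SimpleGraph.Adj.symm h)
        have n41 := fun h => n14 (SimpleGraph.Adj.symm h)
        have n42 := fun h => n24 (SimpleGraph.Adj.symm h)
        clear fφ hφB hBφ main he' hstep fA fB hlow hRAA hRBA hpA hqA
        fin_cases j <;> fin_cases l <;>
          simp only [Fin.mk_one, Fin.zero_eta, Fin.reduceFinMk] at hpq ⊢ <;>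
          first | omega | exact absurd hpq (G.loopless.irrefl _) | contradiction

/-- The exit lemma: an edge `ab` inside a level of a stem, together with a neighbour `d` of `a` in
the next level and a connected set `E` which lies in higher levels, is not attached to `a` or `b`
and is attached to `d` by the single vertex `d'`, gives a parity changing path with last block `E`.
The even and odd paths inside the regular block are a descending path to `a`, and a descending path
to `b` followed by the edge `ba`. -/
lemma Stem.exit (hS : Stem G A x μ φ n) (h3 : G.CliqueFree 3) {a b d d' : V} {E : Set V} {i : ℕ}
    (haA : a ∈ A) (hbA : b ∈ A) (hab : G.Adj a b) (hia : μ a = i) (hib : μ b = i)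
    (hdA : d ∈ A) (had : G.Adj a d) (hid : μ d = i + 1) (hd' : d' ∈ E) (hdd' : G.Adj d d')
    (hEA : E ⊆ A) (hE : Conn G E) (hEi : ∀ w ∈ E, i + 1 ≤ μ w)
    (hEd : ∀ w ∈ E, G.Adj d w → w = d') (hdE : d ∉ E)
    (hEa : ∀ w ∈ E, ¬ G.Adj a w) (hEb : ∀ w ∈ E, ¬ G.Adj b w) :
    ∃ P : PCP G 1, P.IsStrong ∧ P.lastBlock = E ∧ P.origin = x ∧
      P.support ⊆ A ∪ Set.range φ := by
  have hni : n ≤ i := by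
    by_contra hlt
    exact hab.ne (hS.single a haA b hbA (hia.trans hib.symm) (by omega))
  obtain ⟨ra, ra0, ra1, ra2⟩ := hS.lev.chain haA
  obtain ⟨rb, rb0, rb1, rb2⟩ := hS.lev.chain hbA
  rw [hia] at ra0 ra1 ra2
  rw [hib] at rb0 rb1 rb2
  have rax : ra 0 = x := (hS.lev.zero _ (ra1 0 (by omega)).1).1 (ra1 0 (by omega)).2
  have rbx : rb 0 = x := (hS.lev.zero _ (rb1 0 (by omega)).1).1 (rb1 0 (by omega)).2
  have hbd : ¬ G.Adj b d := no_triangle h3 hab had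
  set B : Set V := {w | ∃ t ≤ i, w = ra t} ∪ {w | ∃ t ≤ i, w = rb t} ∪ Set.range φ with hB
  have hBA : ∀ w ∈ B, w ∈ A → μ w ≤ i := by
    rintro w ((⟨t, ht, rfl⟩ | ⟨t, ht, rfl⟩) | ⟨j, rfl⟩) hw
    · rw [(ra1 t ht).2]; exact ht
    · rw [(rb1 t ht).2]; exact ht
    · have := hS.low _ hw j (Or.inl rfl)
      omega
  -- neighbours of the block in higher levels are attached to `a` and `b` only
  have hBup : ∀ w ∈ B, ∀ q ∈ A, i + 1 ≤ μ q → G.Adj w q → w = a ∨ w = b := by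
    rintro w ((⟨t, ht, rfl⟩ | ⟨t, ht, rfl⟩) | ⟨j, rfl⟩) q hq hqi hwq
    · have := hS.lev.step _ (ra1 t ht).1 q hq hwq
      rw [(ra1 t ht).2] at this
      obtain rfl : t = i := by omega
      exact Or.inl ra0
    · have := hS.lev.step _ (rb1 t ht).1 q hq hwq
      rw [(rb1 t ht).2] at this
      obtain rfl : t = i := by omega
      exact Or.inr rb0
    · have := hS.low q hq j (Or.inr hwq.symm)
      omega
  have walkA : ∃ p : G.Walk x a, IsInducedPathW p ∧ (∀ w ∈ p.support, w ∈ B) ∧ p.length = i := by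
    obtain ⟨p, p1, p2, p3⟩ := exists_induced_walk ra i ra2
      (fun s t hst ht h => by
        have := (ra1 t ht).2
        rw [← h, (ra1 s (by omega)).2] at this
        omega)
      (fun s t hst ht h => by
        have := hS.lev.step _ (ra1 s (by omega)).1 _ (ra1 t ht).1 h
        rw [(ra1 s (by omega)).2, (ra1 t ht).2] at this
        omega)
    refine ⟨p.copy rax ra0, ?_, ?_, ?_⟩
    · subst rax; subst ra0; exact p1
    · intro w hw
      rw [SimpleGraph.Walk.support_copy] at hw
      exact Or.inl (Or.inl ((p3 w).1 hw))
    · rw [SimpleGraph.Walk.length_copy]; exact p2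
  have walkB : ∃ p : G.Walk x a, IsInducedPathW p ∧ (∀ w ∈ p.support, w ∈ B) ∧
      p.length = i + 1 := by
    let g : ℕ → V := fun t => if t ≤ i then rb t else a
    have g1 : ∀ t ≤ i, g t = rb t := fun t ht => by simp only [g, ht, if_true]
    have g2 : g (i + 1) = a := by simp [g]
    obtain ⟨p, p1, p2, p3⟩ := exists_induced_walk g (i + 1)
      (fun t ht => by
        rcases Nat.lt_or_ge t i with h | h
        · rw [g1 t h.le, g1 (t + 1) h]; exact rb2 t h
        · obtain rfl : t = i := by omega
          rw [g1 t le_rfl, g2, rb0]; exact hab.symm)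
      (fun s t hst ht h => by
        rw [g1 s (by omega)] at h
        rcases Nat.lt_or_ge i t with h' | h'
        · obtain rfl : t = i + 1 := by omega
          rw [g2] at h
          have hs := (rb1 s (by omega)).2
          rw [h, hia] at hs
          subst hs
          exact hab.ne (h.symm.trans rb0)
        · rw [g1 t h'] at h
          have := (rb1 t h').2
          rw [← h, (rb1 s (by omega)).2] at this
          omega)
      (fun s t hst ht h => by
        rw [g1 s (by omega)] at h
        rcases Nat.lt_or_ge i t with h' | h'
        · obtain rfl : t = i + 1 := by omega
          rw [g2] at h
          have := hS.lev.step _ (rb1 s (by omega)).1 _ haA h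
          rw [(rb1 s (by omega)).2, hia] at this
          have h4 := rb2 s (by omega)
          rw [show s + 1 = i by omega, rb0] at h4
          exact no_triangle h3 h h4 hab
        · rw [g1 t h'] at h
          have := hS.lev.step _ (rb1 s (by omega)).1 _ (rb1 t h').1 h
          rw [(rb1 s (by omega)).2, (rb1 t h').2] at this
          omega)
    have gx : g 0 = x := (g1 0 (by omega)).trans rbx
    refine ⟨p.copy gx g2, ?_, ?_, ?_⟩
    · clear_value g; subst gx; subst g2; exact p1
    · intro w hw
      rw [SimpleGraph.Walk.support_copy] at hw
      obtain ⟨t, ht, rfl⟩ := (p3 w).1 hw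
      rcases Nat.lt_or_ge i t with h' | h'
      · obtain rfl : t = i + 1 := by omega
        rw [g2]
        exact Or.inl (Or.inl ⟨i, le_rfl, ra0.symm⟩)
      · rw [g1 t h']
        exact Or.inl (Or.inr ⟨t, h', rfl⟩)
    · rw [SimpleGraph.Walk.length_copy]; exact p2
  have haB : a ∈ B := Or.inl (Or.inl ⟨i, le_rfl, ra0.symm⟩)
  obtain ⟨P, P1, P2, P3, P4⟩ := exists_pcp_one (G := G) (B := B) (E := E) (x := x) (a := a) (d := d)
    (d' := d') (Or.inl (Or.inl ⟨0, by omega, rax.symm⟩)) haB hd' had hdd'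
    (Set.disjoint_left.2 fun w hw hwE => by
      have h1 := hBA w hw (hEA hwE)
      have h2 := hEi w hwE
      omega)
    (fun h => by have := hBA d h hdA; omega) hdE
    (fun p hp q hq hpq => by
      rcases hBup p hp q (hEA hq) (hEi q hq) hpq with rfl | rfl
      · exact hEa q hq hpq
      · exact hEb q hq hpq)
    (fun p hp hpd => by
      rcases hBup p hp d hdA (by omega) hpd with rfl | rfl
      · rfl
      · exact (hbd hpd).elim)
    hEd
    (by
      rcases Nat.even_or_odd i with h | h
      · obtain ⟨p, p1, p2, p3⟩ := walkB
        exact ⟨p, p1, p2, by rw [p3]; exact h.add_one⟩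
      · obtain ⟨p, p1, p2, p3⟩ := walkA
        exact ⟨p, p1, p2, by rw [p3]; exact h⟩)
    (by
      rcases Nat.even_or_odd i with h | h
      · obtain ⟨p, p1, p2, p3⟩ := walkA
        exact ⟨p, p1, p2, by rw [p3]; exact h⟩
      · obtain ⟨p, p1, p2, p3⟩ := walkB
        exact ⟨p, p1, p2, by rw [p3]; exact h.add_one⟩)
    hE (hS.col_block h3 (by omega) ra1 ra2 rb1)
  refine ⟨P, fun j => ⟨φ, fun t => ?_⟩, P2, P3, ?_⟩
  · rw [P1]; exact Or.inr ⟨t, rfl⟩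
  · intro w hw
    rcases P4 hw with (((⟨t, ht, rfl⟩ | ⟨t, ht, rfl⟩) | h) | h) | h
    · exact Or.inl (ra1 t ht).1
    · exact Or.inl (rb1 t ht).1
    · exact Or.inr h
    · exact Or.inl (hEA h)
    · exact Or.inl (h ▸ hdA)

end Exit

/-! ### Spines: sets in which all ancestors are isolated in their levels -/

/-- A set `N` of vertices of a levelled set `A` which contains all parents of its members, where
these parents have no neighbour in their own level. -/
structure Spine {V : Type} (G : SimpleGraph V) (A : Set V) (x : V) (μ : V → ℕ) (N : Set V) :
    Prop where
  lev : Lev G A x μ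
  sub : N ⊆ A
  par : ∀ v ∈ N, ∀ p ∈ A, G.Adj p v → μ v = μ p + 1 →
    p ∈ N ∧ ∀ w ∈ A, G.Adj p w → μ w ≠ μ p

section Spine

variable {V : Type} {G : SimpleGraph V} {A N : Set V} {x : V} {μ : V → ℕ}

/-- Two isolated vertices of the same level are joined by an induced path of even length through
lower levels: a shortest path in the union of two descending paths. -/
lemma Spine.exists_path (hN : Spine G A x μ N) {p q : V} (hp : p ∈ N) (hq : q ∈ N) (hpq : p ≠ q)
    {j : ℕ} (hpj : μ p = j) (hqj : μ q = j)
    (pi : ∀ w ∈ A, G.Adj p w → μ w ≠ μ p) (qi : ∀ w ∈ A, G.Adj q w → μ w ≠ μ q) :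
    ∃ (m : ℕ) (f : ℕ → V), Even m ∧ 2 ≤ m ∧ f 0 = p ∧ f m = q ∧
      (∀ t, 0 < t → t < m → μ (f t) < j) ∧ (∀ t ≤ m, f t ∈ A) ∧
      (∀ s t, s < t → t ≤ m → f s ≠ f t) ∧
      ∀ s t, s < t → t ≤ m → (G.Adj (f s) (f t) ↔ t = s + 1) := by
  have chain : ∀ p ∈ N, μ p = j → (∀ w ∈ A, G.Adj p w → μ w ≠ μ p) →
      ∃ r : ℕ → V, r j = p ∧ (∀ t ≤ j, r t ∈ A ∧ μ (r t) = t ∧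
        ∀ w ∈ A, G.Adj (r t) w → μ w ≠ μ (r t)) ∧ ∀ t < j, G.Adj (r t) (r (t + 1)) := by
    intro p hp hpj pi
    obtain ⟨r, r0, r1, r2⟩ := hN.lev.chain (hN.sub hp)
    rw [hpj] at r0 r1 r2
    have key : ∀ s t, t + s = j → r t ∈ N ∧ ∀ w ∈ A, G.Adj (r t) w → μ w ≠ μ (r t) := by
      intro s
      induction s with
      | zero =>
        intro t ht
        obtain rfl : t = j := by omega
        rw [r0]
        exact ⟨hp, pi⟩
      | succ s ih =>
        intro t ht
        exact hN.par _ (ih (t + 1) (by omega)).1 _ (r1 t (by omega)).1 (r2 t (by omega))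
          (by rw [(r1 t (by omega)).2, (r1 (t + 1) (by omega)).2])
    refine ⟨r, r0, fun t ht => ⟨(r1 t ht).1, (r1 t ht).2, ?_⟩, r2⟩
    exact (key (j - t) t (by omega)).2
  obtain ⟨r, r0, r1, r2⟩ := chain p hp hpj pi
  obtain ⟨r', r0', r1', r2'⟩ := chain q hq hqj qi
  let B : Set V := {w | (∃ t ≤ j, w = r t) ∨ ∃ t ≤ j, w = r' t}
  have hBA : ∀ w ∈ B, w ∈ A ∧ μ w ≤ j ∧ ∀ w' ∈ A, G.Adj w w' → μ w' ≠ μ w := by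
    rintro w (⟨t, ht, rfl⟩ | ⟨t, ht, rfl⟩)
    · obtain ⟨h1, h2, h3⟩ := r1 t ht
      exact ⟨h1, by omega, h3⟩
    · obtain ⟨h1, h2, h3⟩ := r1' t ht
      exact ⟨h1, by omega, h3⟩
  have hBj : ∀ w ∈ B, μ w = j → w = p ∨ w = q := by
    rintro w (⟨t, ht, rfl⟩ | ⟨t, ht, rfl⟩) hw
    · rw [(r1 t ht).2.1] at hw
      subst hw; exact Or.inl r0
    · rw [(r1' t ht).2.1] at hw
      subst hw; exact Or.inr r0'
  have hlevB : Lev G B x μ := by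
    refine ⟨?_, fun w hw => hN.lev.zero w (hBA w hw).1,
      fun w hw w' hw' => hN.lev.step w (hBA w hw).1 w' (hBA w' hw').1, ?_⟩
    · exact Or.inl ⟨0, by omega, ((hN.lev.zero _ (r1 0 (by omega)).1).1 (r1 0 (by omega)).2.1).symm⟩
    · rintro w (⟨t, ht, rfl⟩ | ⟨t, ht, rfl⟩) i hi
      · rw [(r1 t ht).2.1] at hi
        subst hi
        exact ⟨r i, Or.inl ⟨i, by omega, rfl⟩, r2 i (by omega), (r1 i (by omega)).2.1⟩
      · rw [(r1' t ht).2.1] at hi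
        subst hi
        exact ⟨r' i, Or.inr ⟨i, by omega, rfl⟩, r2' i (by omega), (r1' i (by omega)).2.1⟩
  have hpB : p ∈ B := Or.inl ⟨j, le_rfl, r0.symm⟩
  have hqB : q ∈ B := Or.inr ⟨j, le_rfl, r0'.symm⟩
  obtain ⟨ν, hν⟩ := hlevB.conn.exists_lev hpB
  obtain ⟨f, f0, f1, f2⟩ := hν.chain hqB
  have hparity : ∀ t ≤ ν q, (μ (f t) + j + t) % 2 = 0 := by
    intro t
    induction t with
    | zero =>
      intro _
      have : f 0 = p := (hν.zero _ (f1 0 (by omega)).1).1 (f1 0 (by omega)).2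
      rw [this, hpj]; omega
    | succ t ih =>
      intro ht
      have h1 := ih (by omega)
      have h2 := f2 t (by omega)
      have m1 := (f1 t (by omega)).1
      have m2 := (f1 (t + 1) ht).1
      have h3 := hlevB.step _ m1 _ m2 h2
      have h4 := hlevB.step _ m2 _ m1 h2.symm
      have h5 := (hBA _ m1).2.2 _ (hBA _ m2).1 h2
      omega
  have hf0 : f 0 = p := (hν.zero _ (f1 0 (by omega)).1).1 (f1 0 (by omega)).2
  have hpos : ν q ≠ 0 := fun h => hpq ((hν.zero q hqB).1 h).symm
  have heven : Even (ν q) := by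
    have := hparity (ν q) le_rfl
    rw [f0, hqj] at this
    rw [Nat.even_iff]; omega
  have hne : ∀ s t, s < t → t ≤ ν q → f s ≠ f t := by
    intro s t hst ht h
    have := (f1 t ht).2
    rw [← h, (f1 s (by omega)).2] at this
    omega
  refine ⟨ν q, f, heven, ?_, hf0, f0, ?_, fun t ht => (hBA _ (f1 t ht).1).1, hne, ?_⟩
  · rw [Nat.even_iff] at heven; omega
  · intro t h0 ht
    have m1 := (f1 t ht.le).1
    have := (hBA _ m1).2.1
    by_contra hlt
    rcases hBj _ m1 (by omega) with h | h
    · exact hne 0 t h0 ht.le (hf0.trans h.symm)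
    · exact hne t (ν q) ht le_rfl (h.trans f0.symm)
  · intro s t hst ht
    constructor
    · intro h
      have := hν.step _ (f1 s (by omega)).1 _ (f1 t ht).1 h
      rw [(f1 s (by omega)).2, (f1 t ht).2] at this
      omega
    · rintro rfl
      exact f2 s (by omega)

/-- The parent sets of two nonadjacent vertices of a spine with a common neighbour in the same or in
the next level are nested, since otherwise there is an even hole. -/
lemma Spine.nested (hN : Spine G A x μ N) (h3 : G.CliqueFree 3)
    (heven : ∀ n : ℕ, 6 ≤ n → Even n → NoInducedCycle G n) {a₁ a₂ w : V} {j : ℕ}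
    (h₁ : a₁ ∈ N) (h₂ : a₂ ∈ N) (hne : a₁ ≠ a₂) (hnadj : ¬ G.Adj a₁ a₂)
    (i₁ : μ a₁ = j + 1) (i₂ : μ a₂ = j + 1) (hw : w ∈ A) (hwa₁ : G.Adj w a₁) (hwa₂ : G.Adj w a₂)
    (hwi : μ w = j + 1 ∨ μ w = j + 2) :
    (∀ p ∈ A, μ p = j → G.Adj p a₁ → G.Adj p a₂) ∨ ∀ p ∈ A, μ p = j → G.Adj p a₂ → G.Adj p a₁ := by
  by_contra hcon
  push Not at hcon
  obtain ⟨⟨p, hpA, hpj, hp1, hp2⟩, q, hqA, hqj, hq2, hq1⟩ := hcon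
  have hpq : p ≠ q := by rintro rfl; exact hp2 hq2
  obtain ⟨hpN, pi⟩ := hN.par _ h₁ p hpA hp1 (by omega)
  obtain ⟨hqN, qi⟩ := hN.par _ h₂ q hqA hq2 (by omega)
  obtain ⟨m, f, f1, f2, f3, f4, f5, f6, f7, f8⟩ := hN.exists_path hpN hqN hpq hpj hqj pi qi
  have hA1 := hN.sub h₁
  have hA2 := hN.sub h₂
  have hwp : ¬ G.Adj p w := fun h => no_triangle h3 h hp1 hwa₁
  have hwq : ¬ G.Adj q w := fun h => no_triangle h3 h hq2 hwa₂
  -- vertices of the path other than its ends are in lower levels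
  have hfar : ∀ t, 0 < t → t < m → ∀ z ∈ A, j + 1 ≤ μ z → ¬ G.Adj (f t) z := by
    intro t h0 ht z hz hzj h
    have h1 := f5 t h0 ht
    have h2 := hN.lev.step _ (f6 t ht.le) z hz h
    omega
  have hfle : ∀ t ≤ m, μ (f t) ≤ j := by
    intro t ht
    rcases Nat.eq_zero_or_pos t with rfl | h0
    · rw [f3]; omega
    rcases Nat.lt_or_ge t m with h | h
    · exact (f5 t h0 h).le
    · obtain rfl : t = m := by omega
      rw [f4]; omega
  let g : ℕ → V := fun t => if t ≤ m then f t else if t = m + 1 then a₂ else if t = m + 2 then w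
    else a₁
  have g0 : ∀ t ≤ m, g t = f t := fun t ht => by simp only [g, ht, if_true]
  have g1 : g (m + 1) = a₂ := by simp [g]
  have g2 : g (m + 2) = w := by simp [g]
  have g3 : g (m + 3) = a₁ := by simp [g]
  have hcase : ∀ t, t < m + 4 → t ≤ m ∨ t = m + 1 ∨ t = m + 2 ∨ t = m + 3 := by omega
  have hcase' : ∀ t, t ≤ m → t = 0 ∨ t = m ∨ (0 < t ∧ t < m) := by omega
  obtain ⟨ψ⟩ := exists_cycle_embedding (G := G) g (m + 4) (by omega)
    (by
      intro s t hst ht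
      rcases hcase s (by omega) with hs | rfl | rfl | rfl <;>
        rcases hcase t ht with ht' | rfl | rfl | rfl <;>
        first
        | omega
        | (rw [g0 s hs, g0 t ht']; exact f7 s t hst ht')
        | (rw [g0 s hs]
           intro h
           have h1 := hfle s hs
           rw [h] at h1
           simp only [g1, g2, g3] at h1
           omega)
        | (simp only [g1, g2, g3]; first | exact hne.symm | exact hwa₁.ne | exact hwa₂.ne.symm))
    (by
      intro s t hst ht
      rcases hcase s (by omega) with hs | rfl | rfl | rfl <;>
        rcases hcase t ht with ht' | rfl | rfl | rfl
      · rw [g0 s hs, g0 t ht', f8 s t hst ht']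
        omega
      · rw [g0 s hs, g1]
        rcases hcase' s hs with rfl | rfl | ⟨h0, h1⟩
        · rw [f3]; exact iff_of_false hp2 (by omega)
        · rw [f4]; exact iff_of_true hq2 (by omega)
        · exact iff_of_false (hfar s h0 h1 _ hA2 (by omega)) (by omega)
      · rw [g0 s hs, g2]
        rcases hcase' s hs with rfl | rfl | ⟨h0, h1⟩
        · rw [f3]; exact iff_of_false hwp (by omega)
        · rw [f4]; exact iff_of_false hwq (by omega)
        · exact iff_of_false (hfar s h0 h1 _ hw (by omega)) (by omega)
      · rw [g0 s hs, g3]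
        rcases hcase' s hs with rfl | rfl | ⟨h0, h1⟩
        · rw [f3]; exact iff_of_true hp1 (by omega)
        · rw [f4]; exact iff_of_false hq1 (by omega)
        · exact iff_of_false (hfar s h0 h1 _ hA1 (by omega)) (by omega)
      · omega
      · omega
      · rw [g1, g2]; exact iff_of_true hwa₂.symm (by omega)
      · rw [g1, g3]; exact iff_of_false (fun h => hnadj h.symm) (by omega)
      · omega
      · omega
      · omega
      · rw [g2, g3]; exact iff_of_true hwa₁ (by omega)
      all_goals omega)
  exact (heven (m + 4) (by omega) (f1.add (by decide))).false ψ

lemma mod_succ_cases {r : ℕ} (hr : 0 < r) (t : ℕ) :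
    ((t + 1) % r = t % r + 1 ∧ t % r + 1 < r) ∨ ((t + 1) % r = 0 ∧ t % r + 1 = r) := by
  have hlt := Nat.mod_lt t hr
  have hmod : (t + 1) % r = (t % r + 1) % r := by rw [Nat.mod_add_mod]
  rcases Nat.lt_or_ge (t % r + 1) r with h | h
  · exact Or.inl ⟨by rw [hmod, Nat.mod_eq_of_lt h], h⟩
  · have h' : t % r + 1 = r := by omega
    exact Or.inr ⟨by rw [hmod, h', Nat.mod_self], h'⟩

/-- A set which is not two-colourable contains an odd closed walk, given here as a periodic
sequence. -/
lemma exists_odd_loop {S : Set V} (h : ¬ Col G S 2) :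
    ∃ (m : ℕ) (c : ℕ → V), Odd m ∧ (∀ t, c t ∈ S) ∧ (∀ t, G.Adj (c t) (c (t + 1))) ∧
      ∀ t, c (t + m) = c t := by
  have h' : ¬ (G.induce S).Colorable 2 := fun hc => h (Col.of_colorable hc)
  rw [SimpleGraph.two_colorable_iff_forall_loop_even] at h'
  push Not at h'
  obtain ⟨u, w, hw⟩ := h'
  have hodd : Odd w.length := by simpa using hw
  have hpos : 0 < w.length := hodd.pos
  refine ⟨w.length, fun t => (w.getVert (t % w.length)).1, hodd,
    fun t => (w.getVert _).2, ?_, ?_⟩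
  · intro t
    have hadj : (G.induce S).Adj _ _ := w.adj_getVert_succ (Nat.mod_lt t hpos)
    have hnext : w.getVert ((t + 1) % w.length) = w.getVert (t % w.length + 1) := by
      rcases mod_succ_cases hpos t with ⟨h1, -⟩ | ⟨h1, h2⟩
      · rw [h1]
      · rw [h1, h2, w.getVert_length, w.getVert_zero]
    dsimp only
    rw [hnext]
    exact hadj
  · intro t
    simp

/-- Each level of a spine is two-colourable. In a shortest odd closed walk `c` inside the level,
the parent sets of `c j` and `c (j + 2)` are nested and those of `c j` and `c (j + 4)` are disjoint,
which is impossible for `c 0`, `c 2`, `c 4`, `c 6`. -/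
lemma Spine.col_level (hN : Spine G A x μ N) (h3 : G.CliqueFree 3)
    (heven : ∀ n : ℕ, 6 ≤ n → Even n → NoInducedCycle G n) (i : ℕ) :
    Col G {v | v ∈ N ∧ μ v = i} 2 := by
  classical
  by_contra hcol
  set S : Set V := {v | v ∈ N ∧ μ v = i} with hS
  have hex : ∃ m, ∃ c : ℕ → V, Odd m ∧ (∀ t, c t ∈ S) ∧ (∀ t, G.Adj (c t) (c (t + 1))) ∧
      ∀ t, c (t + m) = c t := exists_odd_loop hcol
  obtain ⟨m, hm, hmin⟩ : ∃ m, (∃ c : ℕ → V, Odd m ∧ (∀ t, c t ∈ S) ∧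
      (∀ t, G.Adj (c t) (c (t + 1))) ∧ ∀ t, c (t + m) = c t) ∧
      ∀ r, (∃ c : ℕ → V, Odd r ∧ (∀ t, c t ∈ S) ∧ (∀ t, G.Adj (c t) (c (t + 1))) ∧
      ∀ t, c (t + r) = c t) → m ≤ r :=
    ⟨Nat.find hex, Nat.find_spec hex, fun r hr => Nat.find_min' hex hr⟩
  obtain ⟨c, hodd, cS, cadj, cper⟩ := hm
  -- a chord closes up a segment of the walk, which is not a shorter odd closed walk
  have close : ∀ a r, Odd r → G.Adj (c (a + r - 1)) (c a) → m ≤ r := by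
    intro a r hr hadj
    refine hmin r ⟨fun t => c (a + t % r), hr, fun t => cS _, ?_, ?_⟩
    · intro t
      dsimp only
      rcases mod_succ_cases hr.pos t with ⟨h1, -⟩ | ⟨h1, h2⟩
      · rw [h1, ← add_assoc]; exact cadj _
      · rw [h1, show a + t % r = a + r - 1 by omega]
        exact hadj
    · intro t
      simp
  have tri : ∀ {a b d : V}, G.Adj a b → G.Adj a d → ¬ G.Adj b d := fun h h' => no_triangle h3 h h'
  have nadj2 : ∀ j, ¬ G.Adj (c j) (c (j + 2)) := fun j => tri (cadj j).symm (cadj (j + 1))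
  obtain ⟨k, rfl⟩ := hodd
  have hk0 : k ≠ 0 := by
    rintro rfl
    exact (cadj 0).ne (cper 0).symm
  have hk1 : k ≠ 1 := by
    rintro rfl
    have := cadj 2
    rw [show 2 + 1 = 0 + (2 * 1 + 1) by rfl, cper 0] at this
    exact nadj2 0 this.symm
  have nadj3 : ∀ j, ¬ G.Adj (c j) (c (j + 3)) := by
    intro j hj
    have := close (j + 3) (2 * k - 1) (by rw [Nat.odd_iff]; omega)
      (by rw [show j + 3 + (2 * k - 1) - 1 = j + (2 * k + 1) by omega, cper]; exact hj)
    omega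
  have ne2 : ∀ j, c j ≠ c (j + 2) := by
    intro j hj
    have := close (j + 2) (2 * k - 1) (by rw [Nat.odd_iff]; omega)
      (by
        have h := cadj (j + 2 * k)
        rw [show j + 2 * k + 1 = j + (2 * k + 1) by omega, cper, hj] at h
        rwa [show j + 2 + (2 * k - 1) - 1 = j + 2 * k by omega])
    omega
  have cN : ∀ j, c j ∈ N := fun j => (cS j).1
  have cA : ∀ j, c j ∈ A := fun j => hN.sub (cN j)
  have ci : ∀ j, μ (c j) = i := fun j => (cS j).2
  obtain ⟨l, rfl⟩ : ∃ l, i = l + 1 := by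
    refine ⟨i - 1, ?_⟩
    by_contra hi
    have h0 : i = 0 := by omega
    have e0 := (hN.lev.zero _ (cA 0)).1 ((ci 0).trans h0)
    have e1 := (hN.lev.zero _ (cA 1)).1 ((ci 1).trans h0)
    exact (cadj 0).ne (e0.trans e1.symm)
  -- the sets of parents
  let P : ℕ → V → Prop := fun j p => p ∈ A ∧ μ p = l ∧ G.Adj p (c j)
  have Pne : ∀ j, ∃ p, P j p := by
    intro j
    obtain ⟨p, h1, h2, h4⟩ := hN.lev.par _ (cA j) l (ci j)
    exact ⟨p, h1, h4, h2⟩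
  have Pnest : ∀ j, (∀ p, P j p → P (j + 2) p) ∨ ∀ p, P (j + 2) p → P j p := by
    intro j
    rcases hN.nested h3 heven (cN j) (cN (j + 2)) (ne2 j) (nadj2 j) (ci j) (ci _) (cA (j + 1))
      (cadj j).symm (cadj (j + 1)) (Or.inl (ci _)) with h | h
    · exact Or.inl fun p ⟨p1, p2, p3⟩ => ⟨p1, p2, h p p1 p2 p3⟩
    · exact Or.inr fun p ⟨p1, p2, p3⟩ => ⟨p1, p2, h p p1 p2 p3⟩
  have Pdisj : ∀ j p, P j p → ¬ P (j + 4) p := by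
    rintro j z ⟨zA, zi, zj⟩ ⟨-, -, zj4⟩
    have nadj4 : ¬ G.Adj (c j) (c (j + 4)) := tri zj zj4
    obtain ⟨w, ⟨wA, wi, w1⟩, -, -, w3⟩ : ∃ w, P (j + 1) w ∧ P (j + 3) w := by
      rcases Pnest (j + 1) with h | h
      · obtain ⟨p, hp⟩ := Pne (j + 1)
        exact ⟨p, hp, h p hp⟩
      · obtain ⟨p, hp⟩ := Pne (j + 3)
        exact ⟨p, h p hp, hp⟩
    have hzw : ¬ G.Adj z w := fun h =>
      (hN.par _ (cN j) z zA zj (by rw [ci, zi])).2 w wA h (wi.trans zi.symm)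
    exact no_six (heven 6 le_rfl (by decide)) zj (cadj j) w1.symm w3 (cadj (j + 3)) zj4.symm
      (tri zj.symm (cadj j)) hzw (fun h => tri h zj4 (cadj (j + 3))) (tri (cadj j).symm w1.symm)
      (nadj3 j) nadj4 (nadj2 (j + 1)) (nadj3 (j + 1))
      (fun h => tri w3 h (cadj (j + 3)))
  rcases Pnest 2 with h24 | h42
  · rcases Pnest 0 with h | h
    · obtain ⟨p, hp⟩ := Pne 0
      exact Pdisj 0 p hp (h24 p (h p hp))
    · obtain ⟨p, hp⟩ := Pne 2
      exact Pdisj 0 p (h p hp) (h24 p hp)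
  · rcases Pnest 4 with h | h
    · obtain ⟨p, hp⟩ := Pne 4
      exact Pdisj 2 p (h42 p hp) (h p hp)
    · obtain ⟨p, hp⟩ := Pne 6
      exact Pdisj 2 p (h42 p (h p hp)) hp

end Spine

/-! ### Leaving the stem when the chromatic number is large -/

section Large

variable {V : Type} {G : SimpleGraph V} {A : Set V} {x : V} {μ : V → ℕ}

/-- If every level is `s`-colourable then everything is `2s`-colourable, as odd and even levels may
use disjoint sets of colours. -/
lemma Lev.exists_level_not_col (h : Lev G A x μ) {s : ℕ} (hA : ¬ Col G A (2 * s)) :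
    ∃ j, ¬ Col G {v | v ∈ A ∧ μ v = j} s := by
  by_contra hno
  push Not at hno
  choose f f1 f2 using hno
  refine hA ⟨fun v => f (μ v) v + s * (μ v % 2), ?_, ?_⟩
  · intro a ha
    have h1 := f1 (μ a) a ⟨ha, rfl⟩
    rcases Nat.mod_two_eq_zero_or_one (μ a) with h2 | h2 <;> simp only [h2] <;> omega
  · intro a ha b hb hab
    have h1 := f1 (μ a) a ⟨ha, rfl⟩
    have h2 := f1 (μ b) b ⟨hb, rfl⟩
    have h3 := h.step a ha b hb hab
    have h4 := h.step b hb a ha hab.symm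
    by_cases h5 : μ a = μ b
    · have := f2 (μ a) a ⟨ha, rfl⟩ b ⟨hb, h5.symm⟩ hab
      simp only [← h5]
      omega
    · rcases Nat.mod_two_eq_zero_or_one (μ a) with h6 | h6
      · have h7 : μ b % 2 = 1 := by omega
        simp only [h6, h7]; omega
      · have h7 : μ b % 2 = 0 := by omega
        simp only [h6, h7]; omega

lemma col_neighbors (h3 : G.CliqueFree 3) (a : V) : Col G {w | G.Adj a w} 1 :=
  col_one_of_stable fun _ hb _ hc => no_triangle h3 hb hc

/-- `v` lies above an edge inside a level: it is reachable, through levels beyond that of `a`, from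
a child `d` of some vertex `a` which is not isolated in its level. -/
def Under (G : SimpleGraph V) (A : Set V) (μ : V → ℕ) (v : V) : Prop :=
  ∃ a ∈ A, ∃ b ∈ A, G.Adj a b ∧ μ b = μ a ∧ ∃ d ∈ A, G.Adj a d ∧ μ d = μ a + 1 ∧
    Relation.ReflTransGen (fun p q => G.Adj p q ∧ q ∈ {w | w ∈ A ∧ μ a + 1 ≤ μ w}) d v

lemma mem_of_reach {i : ℕ} {d v : V} (hd : d ∈ A) (hid : μ d = i + 1)
    (h : Relation.ReflTransGen (fun p q => G.Adj p q ∧ q ∈ {w | w ∈ A ∧ i + 1 ≤ μ w}) d v) :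
    v ∈ A ∧ i + 1 ≤ μ v := by
  rcases Relation.ReflTransGen.cases_tail h with h | ⟨c, _, hc⟩
  · subst h; exact ⟨hd, hid.ge⟩
  · exact hc.2

lemma Under.of_adj {v w : V} (hv : Under G A μ v) (hvw : G.Adj v w) (hw : w ∈ A)
    (hμ : μ v ≤ μ w) : Under G A μ w := by
  obtain ⟨a, ha, b, hb, hab, hμb, d, hd, had, hμd, hr⟩ := hv
  have := mem_of_reach hd hμd hr
  exact ⟨a, ha, b, hb, hab, hμb, d, hd, had, hμd, hr.tail ⟨hvw, hw, by omega⟩⟩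

lemma Lev.spine_not_under (h : Lev G A x μ) : Spine G A x μ {v | v ∈ A ∧ ¬ Under G A μ v} := by
  refine ⟨h, fun v hv => hv.1, ?_⟩
  rintro v ⟨hvA, hv⟩ p hp hpv hμ
  refine ⟨⟨hp, fun hu => hv (hu.of_adj hpv hvA (by omega))⟩, ?_⟩
  intro w hw hpw hwp
  exact hv ⟨p, hp, w, hw, hpw, hwp, v, hvA, hpv, hμ, Relation.ReflTransGen.refl⟩

/-- Some level has large chromatic number; it is mostly made of vertices above edges inside lower
levels, as the rest is two-colourable. A component of this part lies above a single edge `ab`, and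
removing the neighbours of `a`, `b` and of a suitable child of `a` leaves the last block. -/
lemma Stem.exists_pcp_large {φ : cycleGraph 5 ↪g G} {n : ℕ} (hS : Stem G A x μ φ n)
    (h3 : G.CliqueFree 3) (heven : ∀ n : ℕ, 6 ≤ n → Even n → NoInducedCycle G n) {s : ℕ}
    (hA : ¬ Col G A (2 * (s + 3))) :
    ∃ P : PCP G 1, P.IsStrong ∧ ¬ Col G P.lastBlock s ∧ P.origin = x ∧
      P.support ⊆ A ∪ Set.range φ := by
  classical
  obtain ⟨j, hj⟩ := hS.lev.exists_level_not_col hA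
  -- the part of the level above edges inside lower levels
  have hU : ¬ Col G {v | v ∈ A ∧ μ v = j ∧ Under G A μ v} (s + 3) := by
    rintro ⟨f, f1, f2⟩
    obtain ⟨g, g1, g2⟩ := hS.lev.spine_not_under.col_level h3 heven j
    refine hj ⟨fun v => if Under G A μ v then f v else g v, ?_, ?_⟩
    · rintro v ⟨hv, hvj⟩
      by_cases hu : Under G A μ v
      · simp only [hu, if_true]; exact f1 v ⟨hv, hvj, hu⟩
      · simp only [hu, if_false]
        have := g1 v ⟨⟨hv, hu⟩, hvj⟩
        omega
    · rintro v ⟨hv, hvj⟩ w ⟨hw, hwj⟩ hvw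
      have hiff : Under G A μ v ↔ Under G A μ w :=
        ⟨fun hu => hu.of_adj hvw hw (by omega), fun hu => hu.of_adj hvw.symm hv (by omega)⟩
      by_cases hu : Under G A μ v
      · have hu' := hiff.1 hu
        simp only [hu, hu', if_true]
        exact f2 v ⟨hv, hvj, hu⟩ w ⟨hw, hwj, hu'⟩ hvw
      · have hu' : ¬ Under G A μ w := fun h => hu (hiff.2 h)
        simp only [hu, hu', if_false]
        exact g2 v ⟨⟨hv, hu⟩, hvj⟩ w ⟨⟨hw, hu'⟩, hwj⟩ hvw
  obtain ⟨Q, hQ, hQconn, hQcol, -⟩ := exists_component hU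
  obtain ⟨q, hq⟩ := nonempty_of_not_col hQcol
  obtain ⟨a, ha, b, hb, hab, hμb, d, hd, had, hμd, hr⟩ := (hQ hq).2.2
  obtain ⟨i, hi⟩ : ∃ i, μ a = i := ⟨_, rfl⟩
  rw [hi] at hμb hμd hr
  set F : Set V :=
    {v | Relation.ReflTransGen (fun p q => G.Adj p q ∧ q ∈ {w | w ∈ A ∧ i + 1 ≤ μ w}) d v} with hF
  have hFA : ∀ w ∈ F, w ∈ A ∧ i + 1 ≤ μ w := fun w hw => mem_of_reach hd hμd hw
  have hFconn : Conn G F := conn_reach d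
  have hQF : Q ⊆ F := by
    by_contra hsub
    rw [Set.not_subset] at hsub
    obtain ⟨w, hwQ, hwF⟩ := hsub
    obtain ⟨e, he, w', hw', hw'n, hew⟩ := hQconn.exists_boundary (B := Q ∩ F)
      Set.inter_subset_left ⟨q, hq, hr⟩ ⟨w, hwQ, fun h => hwF h.2⟩
    apply hw'n
    refine ⟨hw', Relation.ReflTransGen.tail he.2 ⟨hew, (hQ hw').1, ?_⟩⟩
    have h1 := (hFA q hr).2
    rw [(hQ hq).2.1] at h1
    rwa [(hQ hw').2.1]
  have hFcol : ¬ Col G F (2 + (s + 1)) := fun h => hQcol (h.mono hQF (by omega))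
  have hab2 : Col G ({w | G.Adj a w} ∪ {w | G.Adj b w}) 2 :=
    (col_neighbors h3 a).union (col_neighbors h3 b)
  obtain ⟨E₁, hE₁, hE₁conn, hE₁col, hE₁cl⟩ := exists_component (not_col_diff hFcol hab2)
  obtain ⟨e, he, d₁, hd₁F, hd₁E, hed⟩ := hFconn.exists_boundary (fun w hw => (hE₁ hw).1)
    (nonempty_of_not_col hE₁col)
    ⟨d, Relation.ReflTransGen.refl, fun h => (hE₁ h).2 (Or.inl had)⟩
  have hd₁ab : G.Adj a d₁ ∨ G.Adj b d₁ := by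
    by_contra hno
    exact hd₁E (hE₁cl e he d₁ ⟨hd₁F, fun h => hno h⟩ hed)
  -- the remaining argument is symmetric in `a` and `b`
  have main : ∀ a b, a ∈ A → b ∈ A → G.Adj a b → μ a = i → μ b = i → G.Adj a d₁ →
      (∀ w ∈ E₁, ¬ G.Adj a w) → (∀ w ∈ E₁, ¬ G.Adj b w) →
      ∃ P : PCP G 1, P.IsStrong ∧ ¬ Col G P.lastBlock s ∧ P.origin = x ∧
        P.support ⊆ A ∪ Set.range φ := by
    intro a b ha hb hab hia hib had hEa hEb
    obtain ⟨hd₁A, hd₁i⟩ := hFA d₁ hd₁F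
    have hμd₁ : μ d₁ = i + 1 := by
      have := hS.lev.step a ha d₁ hd₁A had
      omega
    obtain ⟨E₂, hE₂, hE₂conn, hE₂col, hE₂cl⟩ := exists_component
      (not_col_diff (m := 1) (n := s) (by rwa [add_comm]) (col_neighbors h3 d₁))
    obtain ⟨y, hy, d', hd'E, hd'n, hyd'⟩ := hE₁conn.exists_boundary (fun w hw => (hE₂ hw).1)
      (nonempty_of_not_col hE₂col) ⟨e, he, fun h => (hE₂ h).2 hed.symm⟩
    have hdd' : G.Adj d₁ d' := by
      by_contra hno
      exact hd'n (hE₂cl y hy d' ⟨hd'E, hno⟩ hyd')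
    have hsub : ∀ w ∈ insert d' E₂, w ∈ E₁ := by
      rintro w (rfl | hw)
      · exact hd'E
      · exact (hE₂ hw).1
    obtain ⟨P, P1, P2, P3, P4⟩ := hS.exit h3 (E := insert d' E₂) ha hb hab hia hib hd₁A had hμd₁
      (Set.mem_insert _ _) hdd' (fun w hw => (hFA w (hE₁ (hsub w hw)).1).1)
      (hE₂conn.insert_vertex hy hyd'.symm) (fun w hw => (hFA w (hE₁ (hsub w hw)).1).2)
      (by
        rintro w (rfl | hw) hdw
        · rfl
        · exact ((hE₂ hw).2 hdw).elim)
      (fun h => hd₁E (hsub _ h)) (fun w hw => hEa w (hsub w hw)) (fun w hw => hEb w (hsub w hw))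
    refine ⟨P, P1, ?_, P3, P4⟩
    rw [P2]
    exact fun h => hE₂col (h.mono (Set.subset_insert _ _) le_rfl)
  have hEa : ∀ w ∈ E₁, ¬ G.Adj a w := fun w hw h => (hE₁ hw).2 (Or.inl h)
  have hEb : ∀ w ∈ E₁, ¬ G.Adj b w := fun w hw h => (hE₁ hw).2 (Or.inr h)
  rcases hd₁ab with h | h
  · exact main a b ha hb hab hi hμb h hEa hEb
  · exact main b a hb ha hab.symm hμb hi h hEb hEa

end Large

/-! ### Leaving the stem when the chromatic number is small -/

section Small

variable {V : Type} {G : SimpleGraph V} {A : Set V} {x : V} {μ : V → ℕ}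

lemma conn_singleton (v : V) : Conn G {v} := by
  have : Nonempty ({v} : Set V) := ⟨⟨v, rfl⟩⟩
  refine SimpleGraph.Connected.mk (fun p q => ?_)
  have : p = q := Subtype.ext (p.2.trans q.2.symm)
  rw [this]

/-- If no parity changing path leaves the stem, even with a single vertex as its last block, then
three colours suffice. Children of vertices that are not isolated in their level have no children
themselves, the remaining vertices form a spine, each level of which is two-coloured, and a third
colour is needed only on one colour class of these levels and on vertices above the other class. -/
lemma Stem.exists_pcp_small {φ : cycleGraph 5 ↪g G} {n : ℕ} (hS : Stem G A x μ φ n)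
    (h3 : G.CliqueFree 3) (heven : ∀ n : ℕ, 6 ≤ n → Even n → NoInducedCycle G n)
    (hA : ¬ Col G A 3) :
    ∃ P : PCP G 1, P.IsStrong ∧ P.origin = x ∧ P.support ⊆ A ∪ Set.range φ := by
  classical
  by_contra hno
  have tri : ∀ {a b d : V}, G.Adj a b → G.Adj a d → ¬ G.Adj b d := fun h h' => no_triangle h3 h h'
  have noexit : ∀ a ∈ A, ∀ b ∈ A, G.Adj a b → μ b = μ a → ∀ d ∈ A, G.Adj a d → μ d = μ a + 1 →
      ∀ d' ∈ A, G.Adj d d' → μ a + 1 ≤ μ d' → G.Adj b d' := by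
    intro a ha b hb hab hμ d hd had hμd d' hd' hdd' hμd'
    by_contra hbd'
    obtain ⟨P, P1, -, P3, P4⟩ := hS.exit h3 (E := {d'}) ha hb hab rfl hμ hd had hμd rfl hdd'
      (by rintro w rfl; exact hd') (conn_singleton d') (by rintro w rfl; exact hμd')
      (fun w hw _ => hw) (fun h => hdd'.ne h)
      (by rintro w rfl h; exact tri had h hdd') (by rintro w rfl h; exact hbd' h)
    exact hno ⟨P, P1, P3, P4⟩
  let NI : V → Prop := fun v => ∃ w ∈ A, G.Adj v w ∧ μ w = μ v
  -- vertices with a parent that is not isolated in its level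
  let U : Set V := {u | u ∈ A ∧ ∃ a ∈ A, G.Adj a u ∧ μ u = μ a + 1 ∧ NI a}
  have Uchild : ∀ u ∈ U, ∀ c ∈ A, G.Adj u c → μ c ≠ μ u + 1 := by
    rintro u ⟨hu, a, ha, hau, hμ, b, hb, hab, hμb⟩ c hc huc hμc
    have h1 := noexit a ha b hb hab hμb u hu hau hμ c hc huc (by omega)
    have h2 := hS.lev.step b hb c hc h1
    omega
  have Uclosed : ∀ u ∈ U, ∀ w ∈ A, G.Adj u w → μ w = μ u → w ∈ U := by
    rintro u ⟨hu, a, ha, hau, hμ, b, hb, hab, hμb⟩ w hw huw hμw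
    exact ⟨hw, b, hb, noexit a ha b hb hab hμb u hu hau hμ w hw huw (by omega), by omega,
      a, ha, hab.symm, hμb.symm⟩
  have hN : Spine G A x μ {v | v ∈ A ∧ v ∉ U} := by
    refine ⟨hS.lev, fun v hv => hv.1, ?_⟩
    rintro v ⟨hv, hvU⟩ p hp hpv hμ
    exact ⟨⟨hp, fun hpU => Uchild p hpU v hv hpv hμ⟩,
      fun w hw hpw hμw => hvU ⟨hv, p, hp, hpv, hμ, w, hw, hpw, hμw⟩⟩
  choose κ' κ1' κ2' using hN.col_level h3 heven
  let κ : V → ℕ := fun v => κ' (μ v) v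
  have κ1 : ∀ v ∈ A, v ∉ U → κ v < 2 := fun v hv hvU => κ1' (μ v) v ⟨⟨hv, hvU⟩, rfl⟩
  have κ2 : ∀ v ∈ A, v ∉ U → ∀ w ∈ A, w ∉ U → G.Adj v w → μ w = μ v → κ v ≠ κ w := by
    intro v hv hvU w hw hwU hvw hμ
    have := κ2' (μ v) v ⟨⟨hv, hvU⟩, rfl⟩ w ⟨⟨hw, hwU⟩, hμ⟩ hvw
    simp only [κ, hμ]
    exact this
  have parU : ∀ u ∈ A, ∀ a ∈ A, G.Adj a u → μ u = μ a + 1 → a ∉ U :=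
    fun u hu a _ hau hμ haU => Uchild a haU u hu hau hμ
  -- the parents of a vertex that are not isolated in their level have the same colour
  have same : ∀ u ∈ A, NI u → ∀ a₁ ∈ A, ∀ a₂ ∈ A, G.Adj a₁ u → G.Adj a₂ u → μ u = μ a₁ + 1 →
      μ u = μ a₂ + 1 → NI a₁ → NI a₂ → κ a₁ = κ a₂ := by
    rintro u hu ⟨u', hu', huu', hμu'⟩ a₁ ha₁ a₂ ha₂ h₁ h₂ hμ₁ hμ₂
      ⟨b₁, hb₁, hab₁, hμb₁⟩ ⟨b₂, hb₂, hab₂, hμb₂⟩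
    by_cases hne : a₁ = a₂
    · rw [hne]
    have ha₁U := parU u hu a₁ ha₁ h₁ hμ₁
    have ha₂U := parU u hu a₂ ha₂ h₂ hμ₂
    have hb₁u' := noexit a₁ ha₁ b₁ hb₁ hab₁ hμb₁ u hu h₁ hμ₁ u' hu' huu' (by omega)
    have hb₂u' := noexit a₂ ha₂ b₂ hb₂ hab₂ hμb₂ u hu h₂ hμ₂ u' hu' huu' (by omega)
    have hb₁U := parU u' hu' b₁ hb₁ hb₁u' (by omega)
    have hb₂U := parU u' hu' b₂ hb₂ hb₂u' (by omega)
    have c1 := κ1 a₁ ha₁ ha₁U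
    have c2 := κ1 a₂ ha₂ ha₂U
    have c3 := κ1 b₁ hb₁ hb₁U
    have c4 := κ1 b₂ hb₂ hb₂U
    have e1 := κ2 a₁ ha₁ ha₁U b₁ hb₁ hb₁U hab₁ hμb₁
    have e2 := κ2 a₂ ha₂ ha₂U b₂ hb₂ hb₂U hab₂ hμb₂
    by_cases hb : b₁ = b₂
    · subst hb; omega
    by_cases hx₁ : G.Adj a₁ b₂
    · have := κ2 a₁ ha₁ ha₁U b₂ hb₂ hb₂U hx₁ (by omega)
      omega
    by_cases hx₂ : G.Adj a₂ b₁
    · have := κ2 a₂ ha₂ ha₂U b₁ hb₁ hb₁U hx₂ (by omega)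
      omega
    exfalso
    have hna : ¬ G.Adj a₁ a₂ := tri h₁.symm h₂.symm
    have hnb : ¬ G.Adj b₁ b₂ := tri hb₁u'.symm hb₂u'.symm
    obtain ⟨j, hj⟩ : ∃ j, μ a₁ = j + 1 := by
      refine ⟨μ a₁ - 1, ?_⟩
      by_contra h0
      have h1 := (hS.lev.zero a₁ ha₁).1 (by omega)
      have h2 := (hS.lev.zero a₂ ha₂).1 (by omega)
      exact hne (h1.trans h2.symm)
    have common : ∀ a a' w, a ∈ A → a ∉ U → a' ∈ A → a' ∉ U → a ≠ a' → ¬ G.Adj a a' →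
        μ a = j + 1 → μ a' = j + 1 → w ∈ A → G.Adj w a → G.Adj w a' → μ w = j + 2 →
        ∃ p ∈ A, μ p = j ∧ G.Adj p a ∧ G.Adj p a' ∧ ∀ w ∈ A, G.Adj p w → μ w ≠ μ p := by
      intro a a' w ha haU ha' haU' hne hnadj hμ hμ' hw hwa hwa' hμw
      rcases hN.nested h3 heven ⟨ha, haU⟩ ⟨ha', haU'⟩ hne hnadj hμ hμ' hw hwa hwa' (Or.inr hμw)
        with h | h
      · obtain ⟨p, hp, hpa, hμp⟩ := hS.lev.par a ha j hμ
        exact ⟨p, hp, hμp, hpa, h p hp hμp hpa,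
          (hN.par a ⟨ha, haU⟩ p hp hpa (by omega)).2⟩
      · obtain ⟨p, hp, hpa, hμp⟩ := hS.lev.par a' ha' j hμ'
        exact ⟨p, hp, hμp, h p hp hμp hpa, hpa,
          (hN.par a' ⟨ha', haU'⟩ p hp hpa (by omega)).2⟩
    obtain ⟨p, hp, hμp, hp1, hp2, hpi⟩ := common a₁ a₂ u ha₁ ha₁U ha₂ ha₂U hne hna hj (by omega)
      hu h₁.symm h₂.symm (by omega)
    obtain ⟨q, hq, hμq, hq1, hq2, -⟩ := common b₁ b₂ u' hb₁ hb₁U hb₂ hb₂U hb hnb (by omega)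
      (by omega) hu' hb₁u'.symm hb₂u'.symm (by omega)
    exact no_six (heven 6 le_rfl (by decide)) hab₁.symm hp1.symm hp2 hab₂ hq2.symm hq1
      (tri hab₁ hp1.symm) (fun h => hx₂ h.symm) hnb hna hx₁ (tri hab₁.symm hq1.symm)
      (tri hp2.symm hab₂) (fun h => hpi q hq h (hμq.trans hμp.symm)) (tri hab₂.symm hq2.symm)
  -- vertices with the third colour; the others are coloured by the parity of their level
  let T : V → Prop := fun v => NI v ∧ ((v ∉ U ∧ κ v = 1) ∨
    (v ∈ U ∧ ∃ a ∈ A, G.Adj a v ∧ μ v = μ a + 1 ∧ NI a ∧ κ a = 0))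
  have arith : ∀ m n : ℕ, m < 2 → n < 2 → m ≠ n → (m = 0 ↔ ¬ n = 0) ∧ (m = 1 ↔ ¬ n = 1) := by
    omega
  have Tlevel : ∀ v ∈ A, ∀ w ∈ A, G.Adj v w → μ w = μ v → (T v ↔ ¬ T w) := by
    intro v hv w hw hvw hμ
    have niv : NI v := ⟨w, hw, hvw, hμ⟩
    have niw : NI w := ⟨v, hv, hvw.symm, hμ.symm⟩
    by_cases hvU : v ∈ U
    · have hwU := Uclosed v hvU w hw hvw hμ
      obtain ⟨-, a, ha, hav, hμa, nia⟩ := id hvU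
      obtain ⟨b, hb, hab, hμb⟩ := id nia
      have nib : NI b := ⟨a, ha, hab.symm, hμb.symm⟩
      have hbw := noexit a ha b hb hab hμb v hv hav hμa w hw hvw (by omega)
      have haU := parU v hv a ha hav hμa
      have hbU := parU w hw b hb hbw (by omega)
      have c1 := κ1 a ha haU
      have c2 := κ1 b hb hbU
      have c3 := κ2 a ha haU b hb hbU hab hμb
      have t1 : T v ↔ κ a = 0 := by
        constructor
        · rintro ⟨-, ⟨h, -⟩ | ⟨-, a', ha', h1, h2, h4, h5⟩⟩
          · exact (h hvU).elim
          · rw [← h5]; exact same v hv niv a ha a' ha' hav h1 hμa h2 nia h4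
        · intro h
          exact ⟨niv, Or.inr ⟨hvU, a, ha, hav, hμa, nia, h⟩⟩
      have t2 : T w ↔ κ b = 0 := by
        constructor
        · rintro ⟨-, ⟨h, -⟩ | ⟨-, a', ha', h1, h2, h4, h5⟩⟩
          · exact (h hwU).elim
          · rw [← h5]; exact same w hw niw b hb a' ha' hbw h1 (by omega) h2 nib h4
        · intro h
          exact ⟨niw, Or.inr ⟨hwU, b, hb, hbw, by omega, nib, h⟩⟩
      rw [t1, t2]; exact (arith _ _ c1 c2 c3).1
    · have hwU : w ∉ U := fun h => hvU (Uclosed w h v hv hvw.symm hμ.symm)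
      have c1 := κ1 v hv hvU
      have c2 := κ1 w hw hwU
      have c3 := κ2 v hv hvU w hw hwU hvw hμ
      have t1 : T v ↔ κ v = 1 :=
        ⟨fun h => by rcases h.2 with h | h; exacts [h.2, (hvU h.1).elim],
          fun h => ⟨niv, Or.inl ⟨hvU, h⟩⟩⟩
      have t2 : T w ↔ κ w = 1 :=
        ⟨fun h => by rcases h.2 with h | h; exacts [h.2, (hwU h.1).elim],
          fun h => ⟨niw, Or.inl ⟨hwU, h⟩⟩⟩
      rw [t1, t2]; exact (arith _ _ c1 c2 c3).2
  have Tup : ∀ p ∈ A, ∀ v ∈ A, G.Adj p v → μ v = μ p + 1 → T p → ¬ T v := by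
    rintro p hp v hv hpv hμ ⟨nip, h⟩ ⟨niv, h'⟩
    have hpU := parU v hv p hp hpv hμ
    have hvU : v ∈ U := ⟨hv, p, hp, hpv, hμ, nip⟩
    rcases h with ⟨-, h⟩ | ⟨h, -⟩
    · rcases h' with ⟨h', -⟩ | ⟨-, a, ha, h1, h2, h4, h5⟩
      · exact h' hvU
      · have := same v hv niv p hp a ha hpv h1 hμ h2 nip h4
        omega
    · exact hpU h
  refine hA ⟨fun v => if T v then 2 else μ v % 2, ?_, ?_⟩
  · intro v _
    dsimp only
    split_ifs <;> omega
  · intro v hv w hw hvw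
    dsimp only
    have s1 := hS.lev.step v hv w hw hvw
    have s2 := hS.lev.step w hw v hv hvw.symm
    obtain h | h | h : μ w = μ v ∨ μ w = μ v + 1 ∨ μ v = μ w + 1 := by omega
    · have := Tlevel v hv w hw hvw h
      by_cases hT : T v
      · have hT' := this.1 hT
        simp only [hT, hT', if_true, if_false]; omega
      · have hT' : T w := by
          by_contra hc; exact hT (this.2 hc)
        simp only [hT, hT', if_true, if_false]; omega
    · have := Tup v hv w hw hvw h
      by_cases hT : T v
      · have hT' := this hT
        simp only [hT, hT', if_true, if_false]; omega
      · by_cases hT' : T w <;> simp only [hT, hT', if_true, if_false] <;> omega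
    · have := Tup w hw v hv hvw.symm h
      by_cases hT : T w
      · have hT' := this hT
        simp only [hT, hT', if_true, if_false]; omega
      · by_cases hT' : T v <;> simp only [hT, hT', if_true, if_false] <;> omega

end Small

/-! ### Finding a stem -/

section Final

variable {V : Type} {G : SimpleGraph V}

/-- In a connected set `H` containing the five-cycle `φ`, a component `D` of the vertices not
adjacent to `φ`, together with a shortest path from `x` to `D`, is a stem. -/
lemma exists_stem (h3 : G.CliqueFree 3) (h6 : NoInducedCycle G 6) {H : Set V} {x : V}
    (hx : x ∈ H) (hH : Conn G H) (φ : cycleGraph 5 ↪g G) (hφ : ∀ i, φ i ∈ H) {m : ℕ}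
    (hm : ¬ Col G H (4 + m)) :
    ∃ A ⊆ H, ∃ μ n, Stem G A x μ φ n ∧ ¬ Col G A m := by
  classical
  obtain ⟨ρ, hρ⟩ := hH.exists_lev hx
  obtain ⟨D, hDH, hDconn, hDcol, -⟩ :=
    exists_component (not_col_diff hm (col_nbrs_five_cycle h3 h6 φ))
  obtain ⟨d₀, hd₀, hmin⟩ : ∃ d₀ ∈ D, ∀ d ∈ D, ρ d₀ ≤ ρ d := by
    have hex : ∃ n, ∃ d ∈ D, ρ d = n := by
      obtain ⟨d, hd⟩ := nonempty_of_not_col hDcol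
      exact ⟨_, d, hd, rfl⟩
    obtain ⟨d₀, hd₀, h0⟩ := Nat.find_spec hex
    exact ⟨d₀, hd₀, fun d hd => h0.trans_le (Nat.find_min' hex ⟨d, hd, rfl⟩)⟩
  obtain ⟨s, s0, s1, s2⟩ := hρ.chain (hDH hd₀).1
  obtain ⟨n, hn⟩ : ∃ n, ρ d₀ = n := ⟨_, rfl⟩
  rw [hn] at s0 s1 s2 hmin
  set S : Set V := {w | ∃ t ≤ n, w = s t} with hS
  have hSlev : Lev G S x ρ := by
    have hSH : S ⊆ H := by
      rintro w ⟨t, ht, rfl⟩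
      exact (s1 t ht).1
    refine ⟨⟨0, by omega, ((hρ.zero _ (s1 0 (by omega)).1).1 (s1 0 (by omega)).2).symm⟩,
      fun w hw => hρ.zero w (hSH hw), fun w hw w' hw' => hρ.step w (hSH hw) w' (hSH hw'), ?_⟩
    rintro w ⟨t, ht, rfl⟩ i hi
    rw [(s1 t ht).2] at hi
    subst hi
    exact ⟨s i, ⟨i, by omega, rfl⟩, s2 i (by omega), (s1 i (by omega)).2⟩
  have hAH : D ∪ S ⊆ H := by
    rintro w (hw | ⟨t, ht, rfl⟩)
    · exact (hDH hw).1
    · exact (s1 t ht).1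
  have hAconn : Conn G (D ∪ S) :=
    SimpleGraph.induce_union_connected hDconn.preconnected hSlev.conn.preconnected
      ⟨d₀, hd₀, n, le_rfl, s0.symm⟩
  obtain ⟨μ, hμ⟩ := hAconn.exists_lev (Or.inr hSlev.root)
  have hle : ∀ i v, v ∈ D ∪ S → μ v = i → ρ v ≤ i := by
    intro i
    induction i with
    | zero =>
      intro v hv h0
      have := (hμ.zero v hv).1 h0
      exact ((hρ.zero v (hAH hv)).2 this).le
    | succ i ih =>
      intro v hv hi
      obtain ⟨w, hw, hwv, hwi⟩ := hμ.par v hv i hi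
      have h1 := ih w hw hwi
      have h2 := hρ.step w (hAH hw) v (hAH hv) hwv
      omega
  have hsA : ∀ t ≤ n, s t ∈ D ∪ S := fun t ht => Or.inr ⟨t, ht, rfl⟩
  have hge : ∀ t ≤ n, μ (s t) ≤ t := by
    intro t
    induction t with
    | zero =>
      intro h0
      exact ((hμ.zero _ (hsA 0 h0)).2 ((hρ.zero _ (s1 0 h0).1).1 (s1 0 h0).2)).le
    | succ t ih =>
      intro ht
      have h1 := ih (by omega)
      have h2 := hμ.step _ (hsA t (by omega)) _ (hsA (t + 1) ht) (s2 t (by omega))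
      omega
  have hμs : ∀ t ≤ n, μ (s t) = t := by
    intro t ht
    have h1 := hle _ (s t) (hsA t ht) rfl
    rw [(s1 t ht).2] at h1
    exact le_antisymm (hge t ht) h1
  have hlow : ∀ v ∈ D ∪ S, v ∉ D → v = s (μ v) ∧ μ v < n := by
    rintro v (hv | ⟨t, ht, rfl⟩) hvD
    · exact (hvD hv).elim
    · rw [hμs t ht]
      refine ⟨rfl, lt_of_le_of_ne ht ?_⟩
      rintro rfl
      exact hvD (s0 ▸ hd₀)
  have hlow' : ∀ v ∈ D ∪ S, μ v < n → v = s (μ v) := by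
    intro v hv hvn
    refine (hlow v hv fun hvD => ?_).1
    have h1 := hle _ v hv rfl
    have h2 := hmin v hvD
    omega
  have hnbr : ∀ i, ∃ j, G.Adj (φ i) (φ j) := by
    obtain ⟨⟨a01, a12, a23, a34, a04⟩, -⟩ := five_cycle_facts φ
    intro i
    fin_cases i
    exacts [⟨1, a01⟩, ⟨2, a12⟩, ⟨3, a23⟩, ⟨4, a34⟩, ⟨0, a04.symm⟩]
  have hφlow : ∀ v ∈ D ∪ S, ∀ i, v = φ i ∨ G.Adj v (φ i) → μ v < n := by
    intro v hv i hi
    refine (hlow v hv fun hvD => (hDH hvD).2 ?_).2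
    rcases hi with rfl | hi
    · exact hnbr i
    · exact ⟨i, hi⟩
  refine ⟨D ∪ S, hAH, μ, n, ⟨hμ, ?_, hφlow, ?_⟩,
    fun h => hDcol (h.mono Set.subset_union_left le_rfl)⟩
  · intro v hv w hw hvw hvn
    rw [hlow' v hv hvn, hlow' w hw (by omega), hvw]
  · intro v hv w hw i hvi hwi
    have h1 := hφlow v hv i (Or.inr hvi)
    have h2 := hφlow w hw i (Or.inr hwi)
    have e1 := (s1 (μ v) h1.le).2
    have e2 := (s1 (μ w) h2.le).2
    rw [← hlow' v hv h1] at e1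
    rw [← hlow' w hw h2] at e2
    have h4 := hρ.step v (hAH hv) _ (hφ i) hvi
    have h5 := hρ.step _ (hφ i) w (hAH hw) hwi.symm
    omega

lemma exists_parent {v z : V} {k : ℕ} (hk : 1 ≤ k) (hz : z ∈ level G v k) :
    ∃ u ∈ level G v (k - 1), G.Adj u z := by
  obtain ⟨hr, hd⟩ := hz
  obtain ⟨p, hp⟩ := hr.exists_walk_length_eq_dist
  have hlen : p.length = k := hp.trans hd
  have hadj := p.adj_getVert_succ (i := k - 1) (by omega)
  rw [Nat.sub_add_cancel hk, ← hlen, p.getVert_length, hlen] at hadj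
  have h1 : G.dist v (p.getVert (k - 1)) ≤ k - 1 := by
    have := SimpleGraph.dist_le (p.take (k - 1))
    rw [SimpleGraph.Walk.take_length] at this
    omega
  have hr' : G.Reachable v (p.getVert (k - 1)) := ⟨p.take (k - 1)⟩
  obtain ⟨q, hq⟩ := hr'.exists_walk_length_eq_dist
  have h2 := SimpleGraph.dist_le (q.concat hadj)
  rw [SimpleGraph.Walk.length_concat, hq, hd] at h2
  exact ⟨_, ⟨hr', by omega⟩, hadj⟩

end Final

/-! ### The existence of strong rooted parity changing paths -/

/-- Suppose every graph of `C_{3,5,2k≥6}` has chromatic number `< c'`.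
In a connected graph of `C_{3,2k≥6}`, if `χ(N_k) ≥ δ + 1 ≥ 2c' + 1` (`k ≥ 1`), then there
is a strong rooted PCP of order 1 in the level `N_k` with leftovers at least `δ/2 - 15`. -/
theorem strong_rooted_pcp_exists (c' : ℕ) (hc' : 0 < c')
    (hC : ∀ (W : Type) [Fintype W] (H : SimpleGraph W),
      H.CliqueFree 3 → NoInducedCycle H 5 →
      (∀ n : ℕ, 6 ≤ n → Even n → NoInducedCycle H n) → chi H < c')
    (V : Type) [Fintype V] (G : SimpleGraph V) (hconn : G.Connected)
    (h3 : G.CliqueFree 3)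
    (heven : ∀ n : ℕ, 6 ≤ n → Even n → NoInducedCycle G n)
    (v : V) (k δ : ℕ) (hk : 1 ≤ k) (hδ1 : 2 * c' ≤ δ)
    (hχ : δ + 1 ≤ chiSet G (level G v k)) :
    ∃ P : PCP G 1, P.IsStrong ∧ P.IsRootedInLevel v k ∧
      (δ : ℝ) / 2 - 15 ≤ (P.leftovers : ℝ) := by
  classical
  have hc4 := three_lt_of_forall_chi_lt c' hC
  -- a component of the level and a root for it
  have hlev : ¬ Col G (level G v k) δ := fun h => by
    have := chiSet_le_iff.2 h
    omega
  obtain ⟨K, hKlev, hKconn, hKcol, -⟩ := exists_component hlev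
  obtain ⟨z, hz⟩ := nonempty_of_not_col hKcol
  obtain ⟨u, hu, huz⟩ := exists_parent hk (hKlev hz)
  obtain ⟨K', hK', hK'conn, hK'col, hK'cl⟩ := exists_component
    (not_col_diff (m := 1) (n := δ - 1) (by rwa [show 1 + (δ - 1) = δ by omega])
      (col_neighbors h3 u))
  obtain ⟨e, he, x, hxK, hxK', hex⟩ := hKconn.exists_boundary (fun w hw => (hK' hw).1)
    (nonempty_of_not_col hK'col) ⟨z, hz, fun h => (hK' h).2 huz⟩
  have hux : G.Adj u x := by
    by_contra hno
    exact hxK' (hK'cl e he x ⟨hxK, hno⟩ hex)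
  set H : Set V := insert x K' with hH
  have hHconn : Conn G H := hK'conn.insert_vertex he hex.symm
  have hHcol : ¬ Col G H (δ - 1) := fun h => hK'col (h.mono (Set.subset_insert _ _) le_rfl)
  have hHlev : H ⊆ level G v k := by
    rintro w (rfl | hw)
    · exact hKlev hxK
    · exact hKlev (hK' hw).1
  have hHu : ∀ w ∈ H, w ≠ x → ¬ G.Adj u w := by
    rintro w (rfl | hw) hwx
    · exact (hwx rfl).elim
    · exact (hK' hw).2
  -- `H` is not `(δ - 1)`-colourable, so by the choice of `c'` it contains an induced five-cycle
  obtain ⟨φ, hφ⟩ : ∃ φ : cycleGraph 5 ↪g G, ∀ i, φ i ∈ H := by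
    by_contra hno
    have h5 : NoInducedCycle (G.induce H) 5 :=
      ⟨fun ψ => hno ⟨ψ.trans (SimpleGraph.Embedding.induce H), fun i => (ψ i).2⟩⟩
    have hlt : chiSet G H < c' := hC H (G.induce H)
      (h3.comap ⟨(SimpleGraph.Embedding.induce H).toCopy⟩) h5
      (fun n hn he => ⟨fun ψ => (heven n hn he).false
        (ψ.trans (SimpleGraph.Embedding.induce H))⟩)
    exact hHcol ((chiSet_le_iff.1 (Nat.le_sub_one_of_lt hlt)).mono subset_rfl (by omega))
  obtain ⟨A, hAH, μ, n, hS, hA⟩ := exists_stem (m := δ - 5) h3 (heven 6 le_rfl (by decide))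
    (Set.mem_insert x K') hHconn φ hφ (by rwa [show 4 + (δ - 5) = δ - 1 by omega])
  have rooted : ∀ P : PCP G 1, P.origin = x → P.support ⊆ A ∪ Set.range φ →
      P.IsRootedInLevel v k := by
    intro P hP hsub
    have hsub' : P.support ⊆ H := by
      intro w hw
      rcases hsub hw with h | ⟨i, rfl⟩
      · exact hAH h
      · exact hφ i
    refine ⟨hsub'.trans hHlev, u, hu, hP ▸ hux, ?_⟩
    intro w hw hne
    exact hHu w (hsub' hw) (hP ▸ hne)
  -- for `δ ≤ 10` the lower bound is vacuous and any last block will do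
  rcases Nat.lt_or_ge 10 δ with hδ | hδ
  · obtain ⟨P, P1, P2, P3, P4⟩ := hS.exists_pcp_large (s := (δ - 11) / 2) h3 heven
      (fun h => hA (h.mono subset_rfl (by omega)))
    refine ⟨P, P1, rooted P P3 P4, ?_⟩
    have h1 : ¬ P.leftovers ≤ (δ - 11) / 2 := fun h => P2 (chiSet_le_iff.1 h)
    have h2 : δ ≤ 2 * P.leftovers + 30 := by omega
    have h4 : (δ : ℝ) ≤ 2 * P.leftovers + 30 := by exact_mod_cast h2
    linarith
  · obtain ⟨P, P1, P3, P4⟩ := hS.exists_pcp_small h3 heven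
      (fun h => hA (h.mono subset_rfl (by omega)))
    refine ⟨P, P1, rooted P P3 P4, ?_⟩
    have h1 : (δ : ℝ) ≤ 10 := by exact_mod_cast hδ
    have h2 : (0 : ℝ) ≤ P.leftovers := Nat.cast_nonneg _
    linarith
end

section
/- Suppose c' is a positive integer such that every graph containing no triangle, no induced cycle of length 5, and no induced cycle of even length at least 6 has chromatic number less than c'. Let G be a graph containing no triangle and no induced cycle of even length at least 6, let v be a vertex of G and (N_0, N_1, …) be the v-levelling. Let P = (G_1, P_1, H) be a strong rooted PCP of order 1 in a level N_k for some k ≥ 2, with leftovers at least δ, and let A = N(G_1) ∩ N_{k−1} be the active lift of the PCP. If δ ≥ 2c', then χ(A) ≥ δ/(2c'). -/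
/-!
Write `H` for the last block and `k = j + 1`. Two facts give the bound, both obtained by closing
two paths of different parity with one and the same induced path, so that one of the two resulting
induced cycles is even.

* `parent_mem_neighborsOf`: every parent `w'` of a vertex of `H` has a neighbour in the regular
  block `G_1`. If not, take a shortest path from `x_1` to `y_1` through the root, the lower levels,
  `w'`, `H` and `P_1`; its interior is anticomplete to the interiors of the odd and the even path
  of `G_1`, and it has length at least `4`. Hence `H` is dominated by the active lift `A`.
* `no_dominated_five_cycle`: a stable set `S` of level `j` does not dominate an induced 5-cycle
  `h_0 ⋯ h_4` of level `j + 1`. By triangle-freeness a vertex of `S` with a neighbour on the cycle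
  sees exactly one `h_i` ("single at `i`") or exactly `h_{i-1}, h_{i+1}` ("double at `i`"). Two
  vertices of `S` can be joined by an induced path below their level, and by arcs of the 5-cycle
  of different parities if they are singles at distance two or doubles at adjacent positions. So
  doubles occur at no more than two positions, these being at distance two, and the cycle vertices
  they leave uncovered include two nonadjacent ones, which cannot both be covered by singles.

Colour `A` with `χ(A)` colours and split `H` by the colour of a chosen parent. Each part is
dominated by a stable set, hence has no induced 5-cycle and chromatic number less than `c'`
(`colorable_dominated`). Therefore `χ(H) ≤ χ(A) c'`, which is stronger than the required bound by
a factor of two.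
-/

open SimpleGraph

/-! ### Induced paths and cycles as sequences of vertices -/

/-- The vertices `p 0, …, p n` form, in this order, an induced path of length `n` in `G`.
Values of `p` beyond `n` are irrelevant. -/
def InducedSeq {V : Type} (G : SimpleGraph V) (n : ℕ) (p : ℕ → V) : Prop :=
  ∀ i j, i < j → j ≤ n → p i ≠ p j ∧ (G.Adj (p i) (p j) ↔ j = i + 1)

/-- `a` and `b` are joined by a walk of `G` all of whose vertices lie in `T`. -/
def JoinedThrough {V : Type} (G : SimpleGraph V) (T : Set V) (a b : V) : Prop :=
  ∃ w : G.Walk a b, ∀ z ∈ w.support, z ∈ T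

lemma InducedSeq.reverse {V : Type} {G : SimpleGraph V} {n : ℕ} {p : ℕ → V}
    (hp : InducedSeq G n p) : InducedSeq G n (fun i => p (n - i)) := by
  intro i j hij hj
  obtain ⟨h1, h2⟩ := hp (n - j) (n - i) (by omega) (by omega)
  refine ⟨h1.symm, ?_⟩
  rw [G.adj_comm, h2]
  omega

/-- Two induced paths with common ends, whose interiors are disjoint and anticomplete, close up
to an induced cycle. -/
lemma InducedSeq.cycle {V : Type} {G : SimpleGraph V} {n m : ℕ} {p q : ℕ → V}
    (hp : InducedSeq G n p) (hq : InducedSeq G m q) (hn : 2 ≤ n) (hm : 2 ≤ m)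
    (h0 : p 0 = q 0) (hend : p n = q m)
    (hcross : ∀ i j, 0 < i → i < n → 0 < j → j < m → p i ≠ q j ∧ ¬ G.Adj (p i) (q j)) :
    Nonempty (cycleGraph (n + m) ↪g G) := by
  -- walk along `p` and come back along `q`
  let f : ℕ → V := fun i => if i ≤ n then p i else q (n + m - i)
  have key : ∀ i j, i < j → j < n + m →
      f i ≠ f j ∧ (G.Adj (f i) (f j) ↔ j = i + 1 ∨ (i = 0 ∧ j + 1 = n + m)) := by
    intro i j hij hj
    by_cases hjn : j ≤ n
    · have hin : i ≤ n := by omega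
      simp only [f, hjn, hin, if_true]
      obtain ⟨h1, h2⟩ := hp i j hij hjn
      refine ⟨h1, h2.trans ?_⟩
      omega
    · by_cases hin : i ≤ n
      · simp only [f, hjn, hin, if_true, if_false]
        rcases Nat.eq_zero_or_pos i with rfl | hi0
        · obtain ⟨h1, h2⟩ := hq 0 (n + m - j) (by omega) (by omega)
          rw [h0]
          refine ⟨h1, h2.trans ?_⟩
          omega
        rcases Nat.lt_or_ge i n with hi | hi
        · obtain ⟨h1, h2⟩ := hcross i (n + m - j) hi0 hi (by omega) (by omega)
          refine ⟨h1, iff_of_false h2 (by omega)⟩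
        · obtain rfl : i = n := by omega
          obtain ⟨h1, h2⟩ := hq (i + m - j) m (by omega) le_rfl
          rw [hend]
          refine ⟨h1.symm, ?_⟩
          rw [G.adj_comm, h2]
          omega
      · simp only [f, hjn, hin, if_false]
        obtain ⟨h1, h2⟩ := hq (n + m - j) (n + m - i) (by omega) (by omega)
        refine ⟨h1.symm, ?_⟩
        rw [G.adj_comm, h2]
        omega
  have hadj : ∀ u v : Fin (n + m), u < v →
      (G.Adj (f u) (f v) ↔ (cycleGraph (n + m)).Adj u v) := by
    intro u v huv
    have hlt : u.val < v.val := huv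
    have e1 : (u - v).val = n + m + u.val - v.val := Fin.coe_sub_iff_lt.2 huv
    have e2 : (v - u).val = v.val - u.val := Fin.sub_val_of_le huv.le
    rw [cycleGraph_adj', e1, e2, (key u v huv v.isLt).2]
    have := v.isLt
    omega
  refine ⟨⟨⟨fun i => f i, ?_⟩, ?_⟩⟩
  · intro u v huv
    rcases lt_trichotomy u v with h | h | h
    · exact absurd huv (key u v h v.isLt).1
    · exact h
    · exact absurd huv.symm (key v u h u.isLt).1
  · intro u v
    change G.Adj (f u) (f v) ↔ _
    rcases lt_trichotomy u v with h | h | h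
    · exact hadj u v h
    · subst h; simp
    · rw [G.adj_comm, SimpleGraph.adj_comm (cycleGraph (n + m))]
      exact hadj v u h

/-- Two vertices joined inside `T` are joined by an induced path inside `T`, namely a shortest
one. -/
lemma JoinedThrough.exists_inducedSeq {V : Type} {G : SimpleGraph V} {T : Set V} {a b : V}
    (h : JoinedThrough G T a b) :
    ∃ n p, InducedSeq G n p ∧ p 0 = a ∧ p n = b ∧ ∀ i, p i ∈ T := by
  obtain ⟨w, hw⟩ := h
  obtain ⟨s, t, rfl, rfl, hr⟩ : ∃ s t : T, (s : V) = a ∧ (t : V) = b ∧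
      (G.induce T).Reachable s t :=
    ⟨⟨a, hw _ w.start_mem_support⟩, ⟨b, hw _ w.end_mem_support⟩, rfl, rfl, ⟨w.induce T hw⟩⟩
  obtain ⟨q, hq⟩ := hr.exists_walk_length_eq_dist
  -- along a shortest walk the distance to the start increases by one at each step
  have hd : ∀ i ≤ q.length, (G.induce T).dist s (q.getVert i) = i := by
    intro i hi
    have h1 := dist_le (q.take i)
    have h2 := dist_le (q.drop i)
    have h3 := Reachable.dist_triangle_left (G := G.induce T) ⟨q.take i⟩ t
    rw [Walk.take_length] at h1
    rw [Walk.drop_length] at h2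
    omega
  refine ⟨q.length, fun i => (q.getVert i : V), ?_, ?_, ?_, fun i => (q.getVert i).2⟩
  · intro i j hij hj
    have hi := hd i (by omega)
    have hj' := hd j hj
    refine ⟨fun he => ?_, fun hadj => ?_, ?_⟩
    · rw [Subtype.ext he] at hi
      omega
    · have hadj' : (G.induce T).Adj (q.getVert i) (q.getVert j) := hadj
      have h1 := Reachable.dist_triangle_left (G := G.induce T) (u := s) ⟨q.take i⟩ (q.getVert j)
      rw [dist_eq_one_iff_adj.2 hadj'] at h1
      omega
    · rintro rfl
      exact q.adj_getVert_succ (by omega)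
  · simp
  · simp

lemma JoinedThrough.trans {V : Type} {G : SimpleGraph V} {T : Set V} {a b c : V}
    (h : JoinedThrough G T a b) (h' : JoinedThrough G T b c) : JoinedThrough G T a c := by
  obtain ⟨w, hw⟩ := h
  obtain ⟨w', hw'⟩ := h'
  refine ⟨w.append w', fun z hz => ?_⟩
  rcases (Walk.mem_support_append_iff _ _).1 hz with h | h
  exacts [hw z h, hw' z h]

lemma JoinedThrough.symm {V : Type} {G : SimpleGraph V} {T : Set V} {a b : V}
    (h : JoinedThrough G T a b) : JoinedThrough G T b a := by
  obtain ⟨w, hw⟩ := h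
  exact ⟨w.reverse, fun z hz => hw z (by simpa using hz)⟩

lemma JoinedThrough.mono {V : Type} {G : SimpleGraph V} {T T' : Set V} {a b : V}
    (h : JoinedThrough G T a b) (hT : T ⊆ T') : JoinedThrough G T' a b := by
  obtain ⟨w, hw⟩ := h
  exact ⟨w, fun z hz => hT (hw z hz)⟩

lemma JoinedThrough.of_adj {V : Type} {G : SimpleGraph V} {T : Set V} {a b : V}
    (h : G.Adj a b) (ha : a ∈ T) (hb : b ∈ T) : JoinedThrough G T a b :=
  ⟨h.toWalk, fun z hz => by
    simp only [Adj.toWalk, Walk.support_cons, Walk.support_nil, List.mem_cons,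
      List.not_mem_nil, or_false] at hz
    rcases hz with rfl | rfl <;> assumption⟩

lemma joinedThrough_of_connected {V : Type} {G : SimpleGraph V} {T : Set V} {a b : V}
    (h : (G.induce T).Connected) (ha : a ∈ T) (hb : b ∈ T) : JoinedThrough G T a b := by
  obtain ⟨w⟩ := h.preconnected ⟨a, ha⟩ ⟨b, hb⟩
  refine ⟨w.map (Embedding.induce T).toHom, fun z hz => ?_⟩
  have hz' : z ∈ (w.map (Embedding.induce T).toHom).support := hz
  obtain ⟨y, -, rfl⟩ := List.mem_map.1 (Walk.support_map _ w ▸ hz')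
  exact y.2

lemma IsInducedPathW.inducedSeq {V : Type} {G : SimpleGraph V} {a b : V} {w : G.Walk a b}
    (h : IsInducedPathW w) : InducedSeq G w.length w.getVert := by
  intro i j hij hj
  have hne : ∀ i' j', i' ≤ w.length → j' ≤ w.length → w.getVert i' = w.getVert j' → i' = j' :=
    fun i' j' h1 h2 he => h.1.getVert_injOn h1 h2 he
  refine ⟨fun he => hij.ne (hne _ _ (by omega) hj he), fun hadj => ?_, ?_⟩
  · have he := h.2 _ (w.getVert_mem_support i) _ (w.getVert_mem_support j) hadj
    obtain ⟨l, hl, he⟩ := (w.mk_mem_edges_iff_exists).1 he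
    rcases Sym2.eq_iff.1 he with ⟨h1, h2⟩ | ⟨h1, h2⟩
    · have := hne _ _ (by omega) (by omega) h1
      have := hne _ _ (by omega) hj h2
      omega
    · have := hne _ _ (by omega) hj h1
      have := hne _ _ (by omega) (by omega) h2
      omega
  · rintro rfl
    exact w.adj_getVert_succ (by omega)

/-! ### Levels -/

/-- The vertices of the component of `v` at distance less than `j` from `v`. -/
def below {V : Type} (G : SimpleGraph V) (v : V) (j : ℕ) : Set V :=
  {x | G.Reachable v x ∧ G.dist v x < j}

lemma joinedThrough_below {V : Type} {G : SimpleGraph V} {v x : V} {j : ℕ} (hx : x ∈ level G v j) :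
    JoinedThrough G (insert x (below G v j)) v x := by
  obtain ⟨hr, hd⟩ := hx
  obtain ⟨w, hw⟩ := hr.exists_walk_length_eq_dist
  refine ⟨w, fun z hz => ?_⟩
  obtain ⟨i, rfl, hi⟩ := Walk.mem_support_iff_exists_getVert.1 hz
  rcases Nat.lt_or_ge i w.length with h | h
  · have h1 := dist_le (w.take i)
    rw [Walk.take_length] at h1
    exact Or.inr ⟨⟨w.take i⟩, by omega⟩
  · rw [Walk.getVert_of_length_le w h]
    exact Or.inl rfl

/-- Adjacent vertices have distances from `v` that differ by at most one, so there is no edge from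
level `j + 1` to the levels below `j`. -/
lemma not_adj_below {V : Type} {G : SimpleGraph V} {v x y : V} {j : ℕ}
    (hx : x ∈ level G v (j + 1)) (hy : y ∈ below G v j) : ¬ G.Adj x y := by
  intro h
  have h1 := Reachable.dist_triangle_left hy.1 x
  rw [dist_eq_one_iff_adj.2 h.symm] at h1
  have := hx.2
  have := hy.2
  omega

lemma exists_parent_s13 {V : Type} {G : SimpleGraph V} {v x : V} {j : ℕ}
    (hx : x ∈ level G v (j + 1)) : ∃ y ∈ level G v j, G.Adj y x := by
  obtain ⟨hr, hd⟩ := hx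
  obtain ⟨w, hw⟩ := hr.exists_walk_length_eq_dist
  have hadj : G.Adj (w.getVert j) x := by
    have := w.adj_getVert_succ (i := j) (by omega)
    rwa [Walk.getVert_of_length_le w (i := j + 1) (by omega)] at this
  refine ⟨w.getVert j, ⟨⟨w.take j⟩, ?_⟩, hadj⟩
  have h1 := dist_le (w.take j)
  rw [Walk.take_length] at h1
  have h2 := Reachable.dist_triangle_left (⟨w.take j⟩ : G.Reachable v (w.getVert j)) x
  rw [dist_eq_one_iff_adj.2 hadj] at h2
  omega

/-! ### Five-cycles dominated by a stable set of the previous level -/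

/-- Two nonadjacent vertices of a level are joined by an induced path with interior strictly
below that level. -/
lemma exists_path_below {V : Type} {G : SimpleGraph V} {v s t : V} {j : ℕ}
    (hs : s ∈ level G v j) (ht : t ∈ level G v j) (hne : s ≠ t) (hadj : ¬ G.Adj s t) :
    ∃ n q, 2 ≤ n ∧ InducedSeq G n q ∧ q 0 = s ∧ q n = t ∧
      ∀ i, 0 < i → i < n → q i ∈ below G v j := by
  have h1 : JoinedThrough G (insert s (insert t (below G v j))) s t :=
    ((joinedThrough_below hs).mono (by intro z; simp; tauto)).symm.trans
      ((joinedThrough_below ht).mono (by intro z; simp; tauto))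
  obtain ⟨n, q, hq, h0, hn, hT⟩ := h1.exists_inducedSeq
  refine ⟨n, q, ?_, hq, h0, hn, fun i hi hin => ?_⟩
  · by_contra hlt
    have : n = 0 ∨ n = 1 := by omega
    rcases this with rfl | rfl
    · exact hne (h0.symm.trans hn)
    · exact hadj (by rw [← h0, ← hn]; exact (hq 0 1 (by omega) le_rfl).2.2 rfl)
  · have a1 := (hq 0 i hi hin.le).1
    have a2 := (hq i n hin le_rfl).1
    rcases hT i with h | h | h
    · exact absurd (h0.trans h.symm) a1
    · exact absurd (h.trans hn.symm) a2
    · exact h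

lemma arc_adj : ∀ a : Fin 5, ∀ l' < 4, ∀ l < l',
    (a + Fin.ofNat 5 l ≠ a + Fin.ofNat 5 l') ∧
    ((cycleGraph 5).Adj (a + Fin.ofNat 5 l) (a + Fin.ofNat 5 l') ↔ l' = l + 1) := by
  simp only [cycleGraph_adj]
  decide

/-- An arc with at most three edges of an induced five-cycle, extended at its two ends by
nonadjacent vertices `s` and `t`, is an induced path from `s` to `t`. -/
lemma arc_inducedSeq {V : Type} {G : SimpleGraph V} (h : cycleGraph 5 ↪g G) {s t : V}
    (hne : s ≠ t) (hst : ¬ G.Adj s t) (hs : ∀ i, s ≠ h i) (ht : ∀ i, t ≠ h i)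
    (a : Fin 5) (d : ℕ) (hd : d ≤ 3)
    (hsa : ∀ l ≤ d, (G.Adj s (h (a + Fin.ofNat 5 l)) ↔ l = 0))
    (hta : ∀ l ≤ d, (G.Adj t (h (a + Fin.ofNat 5 l)) ↔ l = d)) :
    InducedSeq G (d + 2)
      (fun l => if l = 0 then s else if l ≤ d + 1 then h (a + Fin.ofNat 5 (l - 1)) else t) := by
  intro i j hij hj
  rcases Nat.eq_zero_or_pos i with rfl | hi
  · rcases Nat.lt_or_ge (d + 1) j with hjd | hjd
    · have e1 : j ≠ 0 := by omega
      have e2 : ¬ j ≤ d + 1 := by omega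
      simp only [e1, e2, if_true, if_false]
      exact ⟨hne, iff_of_false hst (by omega)⟩
    · have e1 : j ≠ 0 := by omega
      simp only [e1, hjd, if_true, if_false]
      refine ⟨hs _, (hsa (j - 1) (by omega)).trans (by omega)⟩
  · rcases Nat.lt_or_ge (d + 1) j with hjd | hjd
    · have e1 : j ≠ 0 := by omega
      have e2 : ¬ j ≤ d + 1 := by omega
      have e3 : i ≠ 0 := by omega
      have e4 : i ≤ d + 1 := by omega
      simp only [e1, e2, e3, e4, if_true, if_false]
      refine ⟨(ht _).symm, ?_⟩
      rw [G.adj_comm]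
      exact (hta (i - 1) (by omega)).trans (by omega)
    · have e1 : j ≠ 0 := by omega
      have e3 : i ≠ 0 := by omega
      have e4 : i ≤ d + 1 := by omega
      simp only [e1, hjd, e3, e4, if_true, if_false]
      obtain ⟨h1, h2⟩ := arc_adj a (j - 1) (by omega) (i - 1) (by omega)
      refine ⟨fun he => h1 (h.injective he), ?_⟩
      rw [h.map_adj_iff, h2]
      omega

/-- An arc of a five-cycle in level `j + 1`, extended at both ends to level `j`, closes up with an
induced path below level `j` to an induced cycle. Its length is therefore not an even number
that is at least six. -/
lemma arc_parity {V : Type} {G : SimpleGraph V}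
    (heven : ∀ n : ℕ, 6 ≤ n → Even n → NoInducedCycle G n) {v s t : V} {j : ℕ}
    (h : cycleGraph 5 ↪g G) (hh : ∀ i, h i ∈ level G v (j + 1))
    (hs : s ∈ level G v j) (ht : t ∈ level G v j) (hne : s ≠ t) (hst : ¬ G.Adj s t)
    {n : ℕ} {q : ℕ → V} (hn : 2 ≤ n) (hq : InducedSeq G n q) (h0 : q 0 = s) (hqn : q n = t)
    (hlow : ∀ i, 0 < i → i < n → q i ∈ below G v j)
    (a : Fin 5) (d : ℕ) (hd : d ≤ 3) (h6 : 6 ≤ d + 2 + n)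
    (hsa : ∀ l ≤ d, (G.Adj s (h (a + Fin.ofNat 5 l)) ↔ l = 0))
    (hta : ∀ l ≤ d, (G.Adj t (h (a + Fin.ofNat 5 l)) ↔ l = d)) : ¬ Even (d + 2 + n) := by
  intro hev
  have hlev : ∀ x ∈ level G v j, ∀ i, x ≠ h i := by
    rintro x hx i rfl
    have h1 := hx.2
    have h2 := (hh i).2
    omega
  have hp := arc_inducedSeq h hne hst (hlev s hs) (hlev t ht) a d hd hsa hta
  obtain ⟨f⟩ := hp.cycle hq (by omega) hn (by simp [h0]) (by simp [hqn]) (by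
    intro i l hi hid hl hln
    have e3 : i ≠ 0 := by omega
    have e4 : i ≤ d + 1 := by omega
    simp only [e3, e4, if_true, if_false]
    refine ⟨fun he => ?_, not_adj_below (hh _) (hlow l hl hln)⟩
    have h1 := (hlow l hl hln).2
    rw [← he, (hh _).2] at h1
    omega)
  exact (heven _ h6 hev).false f

lemma InducedSeq.flip {V : Type} {G : SimpleGraph V} {v s t : V} {j n : ℕ} {q : ℕ → V}
    (hq : InducedSeq G n q) (h0 : q 0 = s) (hqn : q n = t)
    (hlow : ∀ i, 0 < i → i < n → q i ∈ below G v j) :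
    ∃ q', InducedSeq G n q' ∧ q' 0 = t ∧ q' n = s ∧
      ∀ i, 0 < i → i < n → q' i ∈ below G v j :=
  ⟨_, hq.reverse, by simpa using hqn, by simpa using h0,
    fun i hi hin => hlow (n - i) (by omega) (by omega)⟩

/-- A stable set of one level cannot dominate an induced five-cycle of the next level. -/
lemma no_dominated_five_cycle {V : Type} {G : SimpleGraph V} (h3 : G.CliqueFree 3)
    (heven : ∀ n : ℕ, 6 ≤ n → Even n → NoInducedCycle G n) {v : V} {j : ℕ} {S : Set V}
    (hS : S ⊆ level G v j) (hstab : ∀ s ∈ S, ∀ t ∈ S, ¬ G.Adj s t)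
    (h : cycleGraph 5 ↪g G) (hh : ∀ i, h i ∈ level G v (j + 1))
    (hdom : ∀ i, ∃ s ∈ S, G.Adj s (h i)) : False := by
  classical
  have hcons : ∀ i, ∀ s ∈ S, G.Adj s (h i) → ¬ G.Adj s (h (i + 1)) := by
    intro i s _ h1 h2
    have h12 : G.Adj (h i) (h (i + 1)) := h.map_adj_iff.2 (by
      rw [cycleGraph_adj]; right; simp)
    exact h3 {s, h i, h (i + 1)} (is3Clique_triple_iff.2 ⟨h1, h2, h12⟩)
  -- `Sg i`: some vertex of `S` sees only `h i`; `D i`: some vertex of `S` sees `h (i ± 1)` only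
  let Sg : Fin 5 → Prop := fun i => ∃ s ∈ S, ∀ l, G.Adj s (h l) ↔ l = i
  let D : Fin 5 → Prop := fun i => ∃ s ∈ S, ∀ l, G.Adj s (h l) ↔ l = i + 4 ∨ l = i + 1
  have hcov : ∀ i, Sg i ∨ D (i + 1) ∨ D (i + 4) := by
    intro i
    obtain ⟨s, hs, hi⟩ := hdom i
    have c1 := hcons i s hs
    have c2 := hcons (i + 1) s hs
    have c3 := hcons (i + 2) s hs
    have c4 := hcons (i + 3) s hs
    have c5 := hcons (i + 4) s hs
    have hall : ∀ i l : Fin 5, l = i ∨ l = i + 1 ∨ l = i + 2 ∨ l = i + 3 ∨ l = i + 4 := by decide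
    have f1 : ∀ i : Fin 5, i + 1 + 1 = i + 2 ∧ i + 2 + 1 = i + 3 ∧ i + 3 + 1 = i + 4 ∧
      i + 4 + 1 = i ∧ i + 1 + 4 = i ∧ i + 4 + 4 = i + 3 := by decide
    have f2 : ∀ i : Fin 5, i + 1 ≠ i ∧ i + 2 ≠ i ∧ i + 3 ≠ i ∧ i + 4 ≠ i ∧ i + 2 ≠ i + 1 ∧
      i + 3 ≠ i + 1 ∧ i + 4 ≠ i + 1 ∧ i + 3 ≠ i + 2 ∧ i + 4 ≠ i + 2 ∧ i + 4 ≠ i + 3 := by decide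
    obtain ⟨g1, g2, g3, g4, g5, g6⟩ := f1 i
    obtain ⟨k1, k2, k3, k4, k5, k6, k7, k8, k9, k10⟩ := f2 i
    rw [g1] at c2
    rw [g2] at c3
    rw [g3] at c4
    rw [g4] at c5
    by_cases b2 : G.Adj s (h (i + 2))
    · refine Or.inr (Or.inl ⟨s, hs, fun l => ?_⟩)
      rw [g5, g1]
      rcases hall i l with rfl | rfl | rfl | rfl | rfl <;> grind
    · by_cases b3 : G.Adj s (h (i + 3))
      · refine Or.inr (Or.inr ⟨s, hs, fun l => ?_⟩)
        rw [g4, g6]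
        rcases hall i l with rfl | rfl | rfl | rfl | rfl <;> grind
      · refine Or.inl ⟨s, hs, fun l => ?_⟩
        rcases hall i l with rfl | rfl | rfl | rfl | rfl <;> grind
  have hSg : ∀ i, ¬ (Sg i ∧ Sg (i + 2)) := by
    rintro i ⟨⟨s, hs, hsi⟩, t, ht, hti⟩
    have hne : s ≠ t := by
      rintro rfl
      have := (hti i).1 ((hsi i).2 rfl)
      clear * - this
      revert i; decide
    obtain ⟨n, q, hn, hq, h0, hqn, hlow⟩ := exists_path_below (hS hs) (hS ht) hne
      (hstab s hs t ht)
    obtain ⟨q', hq', h0', hqn', hlow'⟩ := hq.flip h0 hqn hlow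
    -- the arc from `h i` to `h (i + 2)` with two edges and the one with three edges
    have p2 := arc_parity heven h hh (hS hs) (hS ht) hne (hstab s hs t ht) hn hq h0 hqn hlow
      i 2 (by omega) (by omega)
      (by intro l hl; rw [hsi]; clear * - hl; revert i; interval_cases l <;> decide)
      (by intro l hl; rw [hti]; clear * - hl; revert i; interval_cases l <;> decide)
    rcases Nat.even_or_odd n with hev | hodd
    · exact p2 (by grind)
    · refine arc_parity heven h hh (hS ht) (hS hs) hne.symm (hstab t ht s hs) hn hq' h0' hqn'
        hlow' (i + 2) 3 (by omega) (by omega)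
        (by intro l hl; rw [hti]; clear * - hl; revert i; interval_cases l <;> decide)
        (by intro l hl; rw [hsi]; clear * - hl; revert i; interval_cases l <;> decide) (by grind)
  have hD : ∀ i, ¬ (D i ∧ D (i + 1)) := by
    rintro i ⟨⟨s, hs, hsi⟩, t, ht, hti⟩
    have hne : s ≠ t := by
      rintro rfl
      have := (hti (i + 1)).1 ((hsi _).2 (Or.inr rfl))
      clear * - this
      revert i; decide
    obtain ⟨n, q, hn, hq, h0, hqn, hlow⟩ := exists_path_below (hS hs) (hS ht) hne
      (hstab s hs t ht)
    obtain ⟨q', hq', h0', hqn', hlow'⟩ := hq.flip h0 hqn hlow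
    rcases Nat.even_or_odd n with hev | hodd
    · -- the arc `h (i + 2), h (i + 3), h (i + 4)`
      refine arc_parity heven h hh (hS ht) (hS hs) hne.symm (hstab t ht s hs) hn hq' h0' hqn'
        hlow' (i + 2) 2 (by omega) (by omega)
        (by intro l hl; rw [hti]; clear * - hl; revert i; interval_cases l <;> decide)
        (by intro l hl; rw [hsi]; clear * - hl; revert i; interval_cases l <;> decide) (by grind)
    · -- the edge `h (i + 1), h (i + 2)`; here `n ≥ 3` since `n` is odd
      refine arc_parity heven h hh (hS hs) (hS ht) hne (hstab s hs t ht) hn hq h0 hqn hlow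
        (i + 1) 1 (by omega) (by grind)
        (by intro l hl; rw [hsi]; clear * - hl; revert i; interval_cases l <;> decide)
        (by intro l hl; rw [hti]; clear * - hl; revert i; interval_cases l <;> decide) (by grind)
  have a0 := hcov 0
  have a1 := hcov 1
  have a2 := hcov 2
  have a3 := hcov 3
  have a4 := hcov 4
  have b0 := hSg 0
  have b1 := hSg 1
  have b2 := hSg 2
  have b3 := hSg 3
  have b4 := hSg 4
  have d0 := hD 0
  have d1 := hD 1
  have d2 := hD 2
  have d3 := hD 3
  have d4 := hD 4
  simp only [Fin.reduceAdd] at a0 a1 a2 a3 a4 b0 b1 b2 b3 b4 d0 d1 d2 d3 d4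
  clear_value Sg D
  grind

/-! ### Parents of the last block -/

/-- Every parent of a vertex of the last block of a rooted PCP of order one has a neighbour in
the regular block. Otherwise a shortest path from `x 0` to `y 0` through the root, the lower
levels, that parent, the last block and the path of the PCP closes up with both the odd and the
even path of the regular block to induced cycles, one of which is even. -/
lemma parent_mem_neighborsOf {V : Type} {G : SimpleGraph V}
    (heven : ∀ n : ℕ, 6 ≤ n → Even n → NoInducedCycle G n) {v : V} {j : ℕ} (P : PCP G 1)
    (hroot : P.IsRootedInLevel v (j + 1)) {w w' : V} (hw : w ∈ P.lastBlock)
    (hw' : w' ∈ level G v j) (hadj : G.Adj w' w) : w' ∈ neighborsOf G (P.block 0) := by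
  by_contra hno
  have hno' : ∀ b ∈ P.block 0, ¬ G.Adj b w' := fun b hb h => hno ⟨b, hb, h⟩
  obtain ⟨hlev, u, hu, hux, hu'⟩ := hroot
  rw [Nat.add_sub_cancel] at hu
  have hx : P.x 0 ∈ P.block 0 := P.x_mem 0
  have hy : P.y 0 ∈ P.block 0 := P.y_mem 0
  have sb : ∀ b ∈ P.block 0, b ∈ P.support := fun b hb =>
    Or.inl (Or.inl (Set.mem_iUnion.2 ⟨0, hb⟩))
  set B : Set V := {z | z ∈ (P.path 0).support} ∪ P.lastBlock with hB
  have sB : ∀ b ∈ B, b ∈ P.support := by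
    rintro b (hb | hb)
    · exact Or.inr (Set.mem_iUnion.2 ⟨0, hb⟩)
    · exact Or.inl (Or.inr hb)
  have hdisj : ∀ b ∈ P.block 0, b ∉ P.lastBlock := fun b hb hb' =>
    Set.disjoint_left.1 (P.block_last_disjoint 0) hb hb'
  have hbp : ∀ b ∈ P.block 0, b ∈ (P.path 0).support → b = P.y 0 := by
    intro b hb hb'
    rcases P.block_path_inter 0 0 b hb hb' with h | h
    · exact h.2
    · simp at h
  have hblockB : ∀ b ∈ P.block 0, b ∈ B → b = P.y 0 := by
    rintro b hb (hb' | hb')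
    · exact hbp b hb hb'
    · exact absurd hb' (hdisj b hb)
  have hblockB' : ∀ b ∈ P.block 0, ∀ z ∈ B, G.Adj b z → b = P.y 0 ∨ z = P.y 0 := by
    intro b hb z hz h
    rcases P.edges_within b z (sb b hb) (sB z hz) h with ⟨i, -, h2⟩ | ⟨h1, -⟩ | ⟨i, h1, -⟩
    · obtain rfl := Subsingleton.elim i 0
      exact Or.inr (hblockB z h2 hz)
    · exact absurd h1 (hdisj b hb)
    · obtain rfl := Subsingleton.elim i 0
      exact Or.inl (hbp b hb h1)
  obtain ⟨po, hpo, hpoB, hodd⟩ := P.odd_path 0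
  obtain ⟨pe, hpe, hpeB, hev⟩ := P.even_path 0
  change G.Walk (P.x 0) (P.y 0) at po pe
  have hso := hpo.inducedSeq
  have hse := hpe.inducedSeq
  have hxy : P.x 0 ≠ P.y 0 := by
    intro h
    refine (hso 0 po.length hodd.pos le_rfl).1 ?_
    rw [Walk.getVert_zero, Walk.getVert_length]
    exact h
  have hnxy : ¬ G.Adj (P.x 0) (P.y 0) := by
    intro h
    have hpos : 0 < pe.length := by
      rcases Nat.eq_zero_or_pos pe.length with h0 | h0
      · exact absurd (Walk.eq_of_length_eq_zero h0) hxy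
      · exact h0
    have := (hse 0 pe.length hpos le_rfl).2.1 (by
      rw [Walk.getVert_zero, Walk.getVert_length]; exact h)
    rw [this] at hev
    exact absurd hev (by decide)
  -- the rest of the cycle is a shortest path from `x 0` to `y 0` inside the following set
  set T : Set V := {P.x 0, u, w'} ∪ below G v j ∪ B with hT
  have hjoin : JoinedThrough G T (P.x 0) (P.y 0) := by
    have j1 : JoinedThrough G T (P.x 0) u := .of_adj hux.symm (by simp [hT]) (by simp [hT])
    have j2 : JoinedThrough G T v u := (joinedThrough_below hu).mono (by intro z; simp [hT]; tauto)
    have j3 : JoinedThrough G T v w' :=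
      (joinedThrough_below hw').mono (by intro z; simp [hT]; tauto)
    have j4 : JoinedThrough G T w' w := .of_adj hadj (by simp [hT]) (Or.inr (Or.inr hw))
    have j5 : JoinedThrough G T w (P.x (Fin.last 1)) :=
      (joinedThrough_of_connected P.last_connected hw P.xlast_mem).mono
        fun z hz => Or.inr (Or.inr hz)
    have j6 : JoinedThrough G T (P.y 0) (P.x (Fin.last 1)) :=
      ⟨P.path 0, fun z hz => Or.inr (Or.inl hz)⟩
    exact j1.trans (j2.symm.trans (j3.trans (j4.trans (j5.trans j6.symm))))
  obtain ⟨m, q, hq, hq0, hqm, hqT⟩ := hjoin.exists_inducedSeq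
  have hcases : ∀ i, 0 < i → i < m →
      q i = u ∨ q i = w' ∨ q i ∈ below G v j ∨ (q i ∈ B ∧ q i ≠ P.x 0 ∧ q i ≠ P.y 0) := by
    intro i hi him
    have n1 : q i ≠ P.x 0 := hq0 ▸ (hq 0 i hi him.le).1.symm
    have n2 : q i ≠ P.y 0 := hqm ▸ (hq i m him le_rfl).1
    rcases hqT i with (((h | h | h) | h) | h)
    · exact absurd h n1
    · exact Or.inl h
    · exact Or.inr (Or.inl h)
    · exact Or.inr (Or.inr (Or.inl h))
    · exact Or.inr (Or.inr (Or.inr ⟨h, n1, n2⟩))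
  have hq1 : 1 < m → q 1 = u := by
    intro hm
    have ha : G.Adj (P.x 0) (q 1) := hq0 ▸ (hq 0 1 (by omega) (by omega)).2.2 rfl
    rcases hcases 1 (by omega) hm with h | h | h | ⟨h, h1, h2⟩
    · exact h
    · exact absurd (h ▸ ha) (hno' _ hx)
    · exact absurd ha (not_adj_below (hlev (sb _ hx)) h)
    · rcases hblockB' _ hx _ h ha with h | h
      exacts [absurd h hxy, absurd h h2]
  have hm : 4 ≤ m := by
    by_contra hlt
    have : m = 0 ∨ m = 1 ∨ m = 2 ∨ m = 3 := by omega
    rcases this with rfl | rfl | rfl | rfl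
    · exact hxy (hq0.symm.trans hqm)
    · exact hnxy (by rw [← hq0, ← hqm]; exact (hq 0 1 (by omega) (by omega)).2.2 rfl)
    · refine hu' _ (sb _ hy) hxy.symm ?_
      rw [← hq1 (by omega), ← hqm]
      exact (hq 1 2 (by omega) (by omega)).2.2 rfl
    · have ha : G.Adj (q 2) (P.y 0) := hqm ▸ (hq 2 3 (by omega) (by omega)).2.2 rfl
      have hb : G.Adj u (q 2) := hq1 (by omega) ▸ (hq 1 2 (by omega) (by omega)).2.2 rfl
      rcases hcases 2 (by omega) (by omega) with h | h | h | ⟨h, h1, h2⟩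
      · exact hb.ne h.symm
      · exact hno' _ hy (h ▸ ha.symm)
      · exact not_adj_below (hlev (sb _ hy)) h ha.symm
      · exact hu' _ (sB _ h) h1 hb
  have hfin : ∀ r : G.Walk (P.x 0) (P.y 0), IsInducedPathW r →
      (∀ z ∈ r.support, z ∈ P.block 0) → ¬ Even (r.length + m) := by
    intro r hr hrB hparity
    have hs := hr.inducedSeq
    have hlen : 2 ≤ r.length := by
      by_contra hlt
      have h01 : r.length = 0 ∨ r.length = 1 := by omega
      rcases h01 with h | h
      · exact hxy (Walk.eq_of_length_eq_zero h)
      · exact hnxy (Walk.adj_of_length_eq_one h)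
    obtain ⟨f⟩ := hs.cycle hq hlen (by omega) (by simp [hq0]) (by simp [hqm]) (by
      intro i l hi hir hl hlm
      have hbi : r.getVert i ∈ P.block 0 := hrB _ (r.getVert_mem_support i)
      have n1 : r.getVert i ≠ P.x 0 := by
        have := (hs 0 i hi hir.le).1
        rw [Walk.getVert_zero] at this
        exact this.symm
      have n2 : r.getVert i ≠ P.y 0 := by
        have := (hs i _ hir le_rfl).1
        rwa [Walk.getVert_length] at this
      have hbl := hlev (sb _ hbi)
      have hdist := hbl.2
      rcases hcases l hl hlm with h | h | h | ⟨h, h1, h2⟩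
      · rw [h]
        refine ⟨?_, fun ha => hu' _ (sb _ hbi) n1 ha.symm⟩
        intro he
        rw [he, hu.2] at hdist
        omega
      · rw [h]
        refine ⟨?_, hno' _ hbi⟩
        intro he
        rw [he, hw'.2] at hdist
        omega
      · refine ⟨?_, not_adj_below hbl h⟩
        intro he
        have := h.2
        rw [← he] at this
        omega
      · refine ⟨fun he => n2 (hblockB _ hbi (he ▸ h)), fun ha => ?_⟩
        rcases hblockB' _ hbi _ h ha with h | h
        exacts [n2 h, h2 h])
    exact (heven _ (by omega) hparity).false f
  rcases Nat.even_or_odd m with he | ho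
  · exact hfin pe hpe hpeB (hev.add he)
  · exact hfin po hpo hpoB (hodd.add_odd ho)

/-! ### Colouring the last block -/

lemma colorable_chi {W : Type} [Finite W] (H : SimpleGraph W) : H.Colorable (chi H) :=
  colorable_chromaticNumber_of_fintype H

/-- The part of level `j + 1` dominated by a stable set of level `j` is `c'`-colourable. -/
lemma colorable_dominated {V : Type} [Fintype V] {G : SimpleGraph V} {c' : ℕ}
    (hC : ∀ (W : Type) [Fintype W] (H : SimpleGraph W),
      H.CliqueFree 3 → NoInducedCycle H 5 →
      (∀ n : ℕ, 6 ≤ n → Even n → NoInducedCycle H n) → chi H < c')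
    (h3 : G.CliqueFree 3)
    (heven : ∀ n : ℕ, 6 ≤ n → Even n → NoInducedCycle G n) {v : V} {j : ℕ} {S T : Set V}
    (hS : S ⊆ level G v j) (hstab : ∀ s ∈ S, ∀ t ∈ S, ¬ G.Adj s t)
    (hT : T ⊆ level G v (j + 1)) (hdom : ∀ w ∈ T, ∃ s ∈ S, G.Adj s w) :
    (G.induce T).Colorable c' := by
  classical
  refine (colorable_chi (G.induce T)).mono (hC _ (G.induce T) ?_ ⟨fun f => ?_⟩
    fun n hn he => ⟨fun f => ?_⟩).le
  · exact h3.comap (Embedding.induce T).isContained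
  · exact no_dominated_five_cycle h3 heven hS hstab ((Embedding.induce T).comp f)
      (fun i => hT (f i).2) (fun i => hdom _ (f i).2)
  · exact (heven n hn he).false ((Embedding.induce T).comp f)

/-- Suppose every graph of `C_{3,5,2k≥6}` has chromatic number `< c'`.
Let `G ∈ C_{3,2k≥6}` and `P = (G_1, P_1, H)` a strong rooted PCP of order 1 in a level
`N_k` (`k ≥ 2`) with leftovers at least `δ ≥ 2c'`; let `A = N(G_1) ∩ N_{k-1}` be the
active lift. Then `χ(A) ≥ δ/(2c')`. -/
theorem strong_active_lift_large (c' : ℕ) (hc' : 0 < c')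
    (hC : ∀ (W : Type) [Fintype W] (H : SimpleGraph W),
      H.CliqueFree 3 → NoInducedCycle H 5 →
      (∀ n : ℕ, 6 ≤ n → Even n → NoInducedCycle H n) → chi H < c')
    (V : Type) [Fintype V] (G : SimpleGraph V)
    (h3 : G.CliqueFree 3)
    (heven : ∀ n : ℕ, 6 ≤ n → Even n → NoInducedCycle G n)
    (v : V) (k : ℕ) (hk : 2 ≤ k)
    (P : PCP G 1) (hstrong : P.IsStrong) (hroot : P.IsRootedInLevel v k)
    (δ : ℝ) (hδ : δ ≤ (P.leftovers : ℝ)) (hδ2 : 2 * (c' : ℝ) ≤ δ)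
    (A : Set V) (hA : A = neighborsOf G (P.block 0) ∩ level G v (k - 1)) :
    δ / (2 * (c' : ℝ)) ≤ (chiSet G A : ℝ) := by
  obtain ⟨j, rfl⟩ : ∃ j, k = j + 1 := ⟨k - 1, by omega⟩
  rw [Nat.add_sub_cancel] at hA
  have hAlev : A ⊆ level G v j := by
    rw [hA]; exact Set.inter_subset_right
  have hlast : P.lastBlock ⊆ level G v (j + 1) := fun w hw => hroot.1 (Or.inl (Or.inr hw))
  have hpar : ∀ w : P.lastBlock, ∃ a : A, G.Adj a w := by
    intro w
    obtain ⟨a, ha, haw⟩ := exists_parent_s13 (hlast w.2)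
    exact ⟨⟨a, hA ▸ ⟨parent_mem_neighborsOf heven P hroot w.2 ha haw, ha⟩⟩, haw⟩
  choose par hpar using hpar
  obtain ⟨col⟩ := colorable_chi (G.induce A)
  -- group the vertices of the last block according to the colour of a chosen parent
  let T : Fin (chi (G.induce A)) → Set V := fun c =>
    {w | ∃ h : w ∈ P.lastBlock, col (par ⟨w, h⟩) = c}
  have hTcol : ∀ c, (G.induce (T c)).Colorable c' := by
    intro c
    refine colorable_dominated hC h3 heven (S := {a | ∃ h : a ∈ A, col ⟨a, h⟩ = c})
      (fun a ha => hAlev ha.1) ?_ (fun w hw => hlast hw.1) ?_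
    · rintro s ⟨hs, hsc⟩ t ⟨ht, htc⟩ hst
      have hst' : (G.induce A).Adj ⟨s, hs⟩ ⟨t, ht⟩ := hst
      exact col.valid hst' (hsc.trans htc.symm)
    · rintro w ⟨hw, hwc⟩
      exact ⟨par ⟨w, hw⟩, ⟨(par ⟨w, hw⟩).2, hwc⟩, hpar ⟨w, hw⟩⟩
  let colT : ∀ c, (G.induce (T c)).Coloring (Fin c') := fun c => (hTcol c).some
  let full : (G.induce P.lastBlock).Coloring (Fin (chi (G.induce A)) × Fin c') :=
    Coloring.mk (fun w => (col (par w), colT (col (par w)) ⟨w, w.2, rfl⟩)) (by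
      intro a b hab he
      rw [Prod.mk.injEq] at he
      obtain ⟨e1, e2⟩ := he
      have hab' : ∀ c (ha : (a : V) ∈ T c) (hb : (b : V) ∈ T c),
          colT c ⟨a, ha⟩ ≠ colT c ⟨b, hb⟩ := fun c ha hb =>
        (colT c).valid (show G.Adj a b from hab)
      refine hab' (col (par a)) ⟨a.2, rfl⟩ ⟨b.2, e1.symm⟩ (e2.trans ?_)
      have hcongr : ∀ c d, c = d → ∀ (hc : (b : V) ∈ T c) (hd : (b : V) ∈ T d),
          colT c ⟨b, hc⟩ = colT d ⟨b, hd⟩ := by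
        rintro c _ rfl _ _
        rfl
      exact hcongr _ _ e1.symm _ _)
  have hle : P.leftovers ≤ chi (G.induce A) * c' := by
    have h1 : (G.induce P.lastBlock).Colorable (chi (G.induce A) * c') := by
      have := full.colorable
      rwa [Fintype.card_prod, Fintype.card_fin, Fintype.card_fin] at this
    exact ENat.toNat_le_of_le_natCast h1.chromaticNumber_le
  have hle' : (P.leftovers : ℝ) ≤ (chiSet G A : ℝ) * c' := by exact_mod_cast hle
  have hc : (0 : ℝ) < c' := by exact_mod_cast hc'
  have hnn : (0 : ℝ) ≤ (chiSet G A : ℝ) * c' := by positivity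
  rw [div_le_iff₀ (by positivity)]
  linarith
end
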